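/- Define the height ht(u) of u ∈ NCP(e,e,n+1) with m parts by: ht(u) = n − (m−1)/e if u is short symmetric, ht(u) = n+1 − m/e if u is asymmetric, ht(u) = n+1 − (m−1)/e if u is long symmetric. Then ht is additive for the complement: for u ≼ v, ht(u) + ht(u\v) = ht(v), and in particular ht(u) + ht(ū) = n+1. -/

import Mathlib

/-!
The proof has two ingredients: a count of blocks for classical Kreweras complements, and
expressions of the height through numbers of blocks.

**Counting blocks.** Number the points of a finite set `X` in convex position counterclockwise.
The successor map `σ` of a partition has exactly one wrap-around point (`σ z ≤ z`) in each block,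
so the number of blocks is the number of such points. If `σ_w ∘ σ_u = σ_v` and `u` refines `v`,
then from `z` one meets `σ_v z` no later than `σ_u z`, and this yields, for every `z`,
`[σ_u z ≤ z] + [σ_v z ≤ σ_u z] = 1 + [σ_v z ≤ z]`. Summing over `X` and reindexing the second term
by the bijection `σ_u` gives `|u| + |w| = |X| + |v|` (`krew_count`). It is applied with `X = mu N`
and with `X = azeta e n ζ`, of cardinality `n + 1`.

**Heights.** The group of `e`-th roots of unity acts freely on the parts of the flat, except for a
part with `0` in its convex hull, which is unique and fixed. Hence:

* for symmetric `x`, the flat has `e * q + s` parts and the height is `n - q + s`, with `s = 1` in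
  the long case and `s = 0` in the short case (`ht_symm`);
* for `x` below `M_ζ`, every part of the flat has exactly one rotate in `a_ζ`, and the height is
  `n + 1 - r` with `r` the number of parts of the restriction to `a_ζ` (`ht_below_Mzeta`);
* for `x` above `m_ζ`, a part other than the rotates of that of `0` cannot cross the segments from
  `0` to the rotates of `ζ`, so it has exactly one rotate in the open arc from `ζ` to its next
  rotate, and the height is `n + 2 - r` (`ht_above_mzeta`).

Combined with the block count, these formulas give additivity. In the symmetric case the count
shows that `e` divides `s_v - s_u - s_w`, which must therefore vanish: the value `-2`, possible for
`e = 2`, is excluded since coarsening preserves longness.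
-/

open Set

noncomputable section
open scoped Classical

/-- `u` is a set-theoretical partition of the set `x ⊆ ℂ`. -/
def IsPartitionOf (x : Set ℂ) (u : Set (Set ℂ)) : Prop :=
  (∀ a ∈ u, a.Nonempty ∧ a ⊆ x) ∧ ∀ z ∈ x, ∃! a, a ∈ u ∧ z ∈ a

/-- The refinement order on partitions. -/
def Refines (u v : Set (Set ℂ)) : Prop :=
  ∀ a ∈ u, ∃ b ∈ v, a ⊆ b

/-- A partition is non-crossing if the convex hulls of two parts can only meet
when the parts are equal. -/
def IsNoncrossing (u : Set (Set ℂ)) : Prop :=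
  ∀ a ∈ u, ∀ b ∈ u, (convexHull ℝ a ∩ convexHull ℝ b).Nonempty → a = b

/-- The set-theoretical meet of two partitions: parts are the nonempty
intersections of parts. -/
def meetParts (u v : Set (Set ℂ)) : Set (Set ℂ) :=
  {s | s.Nonempty ∧ ∃ a ∈ u, ∃ b ∈ v, s = a ∩ b}

/-- The set of `n`-th roots of unity. -/
def mu (n : ℕ) : Set ℂ := {z : ℂ | z ^ n = 1}

/-- `ζ_n = exp(2iπ/n)`. -/
def zeta (n : ℕ) : ℂ := Complex.exp (2 * (Real.pi : ℂ) * Complex.I / (n : ℂ))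

/-- Multiplication of a partition by a complex constant. -/
def rotate (c : ℂ) (u : Set (Set ℂ)) : Set (Set ℂ) :=
  (fun a => (fun z => c * z) '' a) '' u

/-- Invariance of a partition under multiplication by the group `μ_e`. -/
def MuInvariant (e : ℕ) (u : Set (Set ℂ)) : Prop :=
  ∀ ζ : ℂ, ζ ^ e = 1 → rotate ζ u = u

/-- `NCP(e,1,n)`: non-crossing partitions of `μ_{en}` fixed by the `μ_e`-action. -/
def NCPmu (e n : ℕ) : Set (Set (Set ℂ)) :=
  {u | IsPartitionOf (mu (e * n)) u ∧ IsNoncrossing u ∧ MuInvariant e u}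

/-- A partition is long if `0` lies in the convex hull of one of its parts. -/
def IsLong (u : Set (Set ℂ)) : Prop :=
  ∃ a ∈ u, (0 : ℂ) ∈ convexHull ℝ a

/-- The partition `u^♭` obtained by forgetting `0`. -/
def flatNCP (u : Set (Set ℂ)) : Set (Set ℂ) :=
  {s | s.Nonempty ∧ ∃ a ∈ u, s = a \ {0}}

/-- `NCP(e,e,n+1)`: non-crossing partitions of `μ_{en} ∪ {0}` such that the
partition obtained by forgetting `0` is `μ_e`-invariant. -/
def NCPee (e n : ℕ) : Set (Set (Set ℂ)) :=
  {u | IsPartitionOf (insert 0 (mu (e * n))) u ∧ IsNoncrossing u ∧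
    MuInvariant e (flatNCP u)}

/-- The trivial (one-block) partition of `μ_{en} ∪ {0}`. -/
def trivEE (e n : ℕ) : Set (Set ℂ) := {insert 0 (mu (e * n))}

/-- The discrete partition of `μ_n`. -/
def discMu (n : ℕ) : Set (Set ℂ) := {s | ∃ z ∈ mu n, s = {z}}

/-- `z'` is the counterclockwise successor of `z` on the boundary of the convex
set `b` (all remaining points of `b` are strictly on the left of the directed
line from `z` to `z'`). -/
def ccwSucc (b : Set ℂ) (z z' : ℂ) : Prop :=
  z ∈ b ∧ z' ∈ b ∧ z ≠ z' ∧
    ∀ w ∈ b, w ≠ z → w ≠ z' →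
      0 < ((z' - z).re * (w - z).im - (z' - z).im * (w - z).re)

/-- `σ` is the permutation associated with a partition `u` (of a set in convex
position), sending each element of a part to its counterclockwise successor in
that part. -/
def IsSuccMapOn (u : Set (Set ℂ)) (σ : ℂ → ℂ) : Prop :=
  ∀ b ∈ u, ∀ z ∈ b, (b = {z} → σ z = z) ∧ (b ≠ {z} → ccwSucc b z (σ z))

/-- Restriction of a partition to the subset `X`. -/
def resTo (X : Set ℂ) (u : Set (Set ℂ)) : Set (Set ℂ) :=
  {s | s.Nonempty ∧ ∃ a ∈ u, s = a ∩ X}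

/-- `w` is the (classical) Kreweras complement of `u` in `v`, for partitions of
a subset `X ⊆ ℂ` in convex position: it is characterized by
`σ_u σ_w = σ_v` (composition of motions). -/
def KrewRel (X : Set ℂ) (u v w : Set (Set ℂ)) : Prop :=
  Refines u v ∧ Refines w v ∧
    ∃ σu σv σw : ℂ → ℂ, IsSuccMapOn u σu ∧ IsSuccMapOn v σv ∧ IsSuccMapOn w σw ∧
      ∀ z ∈ X, σw (σu z) = σv z

/-- An element of `NCP(e,e,n+1)` is symmetric if `{0}` is a part (short
symmetric) or its flat is long (long symmetric); otherwise it is asymmetric. -/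
def SymmPart (u : Set (Set ℂ)) : Prop :=
  ({0} : Set ℂ) ∈ u ∨ IsLong (flatNCP u)

/-- The map `* : NCP(e,1,n) → NCP(e,e,n+1)`: add `{0}` as a singleton part if
`u` is short, add `0` to the long part if `u` is long. -/
def starNCP (u : Set (Set ℂ)) : Set (Set ℂ) :=
  if IsLong u then
    {s | ∃ a ∈ u, s = if (0 : ℂ) ∈ convexHull ℝ a then insert 0 a else a}
  else insert {(0 : ℂ)} u

/-- The part of `v` containing `0`. -/
def asymPart (v : Set (Set ℂ)) : Set ℂ := ⋃₀ {a ∈ v | (0 : ℂ) ∈ a}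

/-- The union `ã` of the `μ_e`-orbit of the part of `v` containing `0`
(with `0` removed). -/
def tildePart (e : ℕ) (v : Set (Set ℂ)) : Set ℂ :=
  ⋃ ζ ∈ {z : ℂ | z ^ e = 1}, (fun z => ζ * z) '' (asymPart v \ {0})

/-- The map `♯ : NCP(e,e,n+1) → NCP(e,1,n)`. -/
def sharpNCP (e : ℕ) (v : Set (Set ℂ)) : Set (Set ℂ) :=
  if SymmPart v then flatNCP v
  else insert (tildePart e v) {b ∈ flatNCP v | ¬ b ⊆ tildePart e v}

/-- The minimal asymmetric partition `m_ζ`, with only non-singleton part `{0, ζ}`. -/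
def mzeta (e n : ℕ) (ζ : ℂ) : Set (Set ℂ) :=
  insert {0, ζ} {s | ∃ z ∈ mu (e * n), z ≠ ζ ∧ s = {z}}

/-- The set `a_ζ = {0, ζ_{en}ζ, ζ_{en}²ζ, …, ζ_{en}ⁿζ}`. -/
def azeta (e n : ℕ) (ζ : ℂ) : Set ℂ :=
  insert 0 {z : ℂ | ∃ k : ℕ, 1 ≤ k ∧ k ≤ n ∧ z = zeta (e * n) ^ k * ζ}

/-- The maximal asymmetric partition `M_ζ`, with asymmetric part `a_ζ` and
remaining parts `ζ' a_ζ ∖ {0}` for `ζ' ∈ μ_e ∖ {1}`. -/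
def Mzeta (e n : ℕ) (ζ : ℂ) : Set (Set ℂ) :=
  insert (azeta e n ζ)
    {s | ∃ ζ' : ℂ, ζ' ^ e = 1 ∧ ζ' ≠ 1 ∧ s = (fun z => ζ' * z) '' (azeta e n ζ \ {0})}

/-- `w` is the complement `u\v` of `u` in `v`, in `NCP(e,e,n+1)`, following the
three cases of the definition: (A) both symmetric, computed through the flats
in `NCP(e,1,n)`; (B) `v` asymmetric, computed in some interval `[disc, M_ζ]`
through restriction to `a_ζ`; (C) `u` asymmetric, computed through the
isomorphisms `ψ_ζ` and `φ_ζ` with the non-crossing partitions of `a_ζ`. -/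
def IsComplEE (e n : ℕ) (u v w : Set (Set ℂ)) : Prop :=
  Refines u v ∧
    ((SymmPart u ∧ SymmPart v ∧
        ∃ k, KrewRel (mu (e * n)) (flatNCP u) (flatNCP v) k ∧ w = starNCP k) ∨
     (¬ SymmPart v ∧ ∃ ζ : ℂ, ζ ^ (e * n) = 1 ∧ Refines v (Mzeta e n ζ) ∧
        Refines w (Mzeta e n ζ) ∧
        KrewRel (azeta e n ζ) (resTo (azeta e n ζ) u) (resTo (azeta e n ζ) v)
          (resTo (azeta e n ζ) w)) ∨
     (¬ SymmPart u ∧ ∃ ζ : ℂ, ζ ^ (e * n) = 1 ∧ Refines (mzeta e n ζ) u ∧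
        Refines w (Mzeta e n ζ) ∧
        KrewRel (azeta e n ζ) (resTo (azeta e n ζ) u) (resTo (azeta e n ζ) v)
          (resTo (azeta e n ζ) w)))

/-- Height of an element of `NCP(e,e,n+1)` with `m` parts: `n - (m-1)/e` in the
short symmetric case, `n+1 - (m-1)/e` in the long symmetric case,
`n+1 - m/e` in the asymmetric case. -/
def htEE (e n : ℕ) (u : Set (Set ℂ)) : ℤ :=
  if ({0} : Set ℂ) ∈ u then (n : ℤ) - ((u.ncard : ℤ) - 1) / (e : ℤ)
  else if IsLong (flatNCP u) then (n : ℤ) + 1 - ((u.ncard : ℤ) - 1) / (e : ℤ)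
  else (n : ℤ) + 1 - (u.ncard : ℤ) / (e : ℤ)

/-- The height-one symmetric partition `u_{p,q}`, with non-singleton parts the
`e` rotates `ζ_e^i {ζ_{ne}^p, ζ_{ne}^q}`. -/
def upq (e n : ℕ) (p q : ℤ) : Set (Set ℂ) :=
  {s | ∃ ζ : ℂ, ζ ^ e = 1 ∧ s = {ζ * zeta (e * n) ^ p, ζ * zeta (e * n) ^ q}} ∪
    {s | ∃ z ∈ insert (0 : ℂ) (mu (e * n)), s = {z} ∧
      ∀ ζ : ℂ, ζ ^ e = 1 → z ≠ ζ * zeta (e * n) ^ p ∧ z ≠ ζ * zeta (e * n) ^ q}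

/-- The height-one asymmetric partition `u_p`, with unique non-singleton part
`{0, ζ_{en}^p}`. -/
def upt (e n : ℕ) (p : ℤ) : Set (Set ℂ) :=
  insert {0, zeta (e * n) ^ p}
    {s | ∃ z ∈ mu (e * n), z ≠ zeta (e * n) ^ p ∧ s = {z}}

/-- A weakly increasing chain of length `N` in a set `S` of partitions. -/
def IsChainOf (S : Set (Set (Set ℂ))) (N : ℕ) (c : Fin N → Set (Set ℂ)) : Prop :=
  (∀ i, c i ∈ S) ∧ ∀ i j : Fin N, i ≤ j → Refines (c i) (c j)

/-! ### Counting the blocks of a Kreweras complement -/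

/-- The signed double area of the triangle `z z' w`: positive exactly when `w` lies strictly to the
left of the directed line from `z` to `z'`. -/
def orient (z z' w : ℂ) : ℝ := (z' - z).re * (w - z).im - (z' - z).im * (w - z).re

/-- `ι` numbers the points of `X` in counterclockwise order, and `X` is in strictly convex
position. -/
def CcwNumbering (X : Set ℂ) (ι : ℂ → ℕ) : Prop :=
  InjOn ι X ∧ ∀ x ∈ X, ∀ y ∈ X, ∀ z ∈ X, ι x < ι y → ι y < ι z → 0 < orient x y z

/-- `z'` follows `z` in the cyclic order on `b` induced by the numbering `ι`: either `z'` is the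
next larger element, or `z` is the largest element of `b` and `z'` the smallest. -/
def CycSucc (ι : ℂ → ℕ) (b : Set ℂ) (z z' : ℂ) : Prop :=
  z' ∈ b ∧ ((ι z < ι z' ∧ ∀ y ∈ b, ι y ≤ ι z ∨ ι z' ≤ ι y) ∨
    (ι z' ≤ ι z ∧ ∀ y ∈ b, ι z' ≤ ι y ∧ ι y ≤ ι z))

theorem orient_rot (x y z : ℂ) : orient y z x = orient x y z := by
  simp only [orient, Complex.sub_re, Complex.sub_im]; ring

theorem orient_swap (x y z : ℂ) : orient y x z = - orient x y z := by
  simp only [orient, Complex.sub_re, Complex.sub_im]; ring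

theorem IsPartitionOf.eq_of_mem {X : Set ℂ} {u : Set (Set ℂ)} (hu : IsPartitionOf X u)
    {a b : Set ℂ} {z : ℂ} (ha : a ∈ u) (hb : b ∈ u) (hza : z ∈ a) (hzb : z ∈ b) : a = b :=
  (hu.2 z ((hu.1 a ha).2 hza)).unique ⟨ha, hza⟩ ⟨hb, hzb⟩

theorem IsPartitionOf.finite {X : Set ℂ} {u : Set (Set ℂ)} (hu : IsPartitionOf X u)
    (hX : X.Finite) : u.Finite :=
  hX.finite_subsets.subset fun a ha => (hu.1 a ha).2

/-- In convex position, the geometric successor map of a partition is the cyclic successor for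
the numbering. -/
theorem cycSucc_of_succMap {X : Set ℂ} {ι : ℂ → ℕ} (hι : CcwNumbering X ι) {u : Set (Set ℂ)}
    (hu : IsPartitionOf X u) {σ : ℂ → ℂ} (hσ : IsSuccMapOn u σ) {b : Set ℂ} (hb : b ∈ u) {z : ℂ}
    (hz : z ∈ b) : CycSucc ι b z (σ z) := by
  by_cases hs : b = {z}
  · have h := (hσ b hb z hz).1 hs
    rw [h]
    refine ⟨hz, Or.inr ⟨le_rfl, ?_⟩⟩
    intro y hy
    rw [hs] at hy
    rw [mem_singleton_iff.1 hy]
    exact ⟨le_rfl, le_rfl⟩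
  obtain ⟨-, hz', hne, hleft⟩ := (hσ b hb z hz).2 hs
  have hbX := (hu.1 b hb).2
  have hleft' : ∀ y ∈ b, y ≠ z → y ≠ σ z → 0 < orient z (σ z) y := hleft
  refine ⟨hz', ?_⟩
  have hιne : ι z ≠ ι (σ z) := fun h => hne (hι.1 (hbX hz) (hbX hz') h)
  rcases lt_or_gt_of_ne hιne with hlt | hgt
  · refine Or.inl ⟨hlt, fun y hy => ?_⟩
    by_contra! hcon
    have h1 := hι.2 z (hbX hz) y (hbX hy) (σ z) (hbX hz') hcon.1 hcon.2
    have h2 := hleft' y hy (by rintro rfl; omega) (by rintro rfl; omega)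
    have h3 := orient_swap y z (σ z)
    have h4 := orient_rot y z (σ z)
    linarith
  · refine Or.inr ⟨hgt.le, fun y hy => ?_⟩
    by_contra hcon
    have hyz : y ≠ z := by rintro rfl; exact hcon ⟨hgt.le, le_rfl⟩
    have hys : y ≠ σ z := by rintro rfl; exact hcon ⟨le_rfl, hgt.le⟩
    have h2 := hleft' y hy hyz hys
    have h3 := orient_swap (σ z) z y
    rcases lt_or_ge (ι y) (ι (σ z)) with h | h
    · have h1 := hι.2 y (hbX hy) (σ z) (hbX hz') z (hbX hz) h hgt
      have h4 := orient_rot y (σ z) z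
      linarith
    · have h5 : ι z < ι y := by
        by_contra! h6
        exact hcon ⟨h, h6⟩
      have h1 := hι.2 (σ z) (hbX hz') z (hbX hz) y (hbX hy) hgt h5
      linarith

/-- Each block contains exactly one point at which the successor map does not increase the
numbering, namely its largest point. -/
theorem ncard_eq_card_wrap {X : Set ℂ} (hX : X.Finite) {ι : ℂ → ℕ} (hι : InjOn ι X)
    {u : Set (Set ℂ)} (hu : IsPartitionOf X u) {σ : ℂ → ℂ}
    (hσ : ∀ b ∈ u, ∀ z ∈ b, CycSucc ι b z (σ z)) :
    u.ncard = (hX.toFinset.filter fun z => ι (σ z) ≤ ι z).card := by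
  have hmax : ∀ b ∈ u, ∃ z ∈ b, ∀ y ∈ b, ι y ≤ ι z := fun b hb =>
    exists_max_image b ι (hX.subset (hu.1 b hb).2) (hu.1 b hb).1
  choose! f hf hfmax using hmax
  rw [← Set.ncard_coe_finset]
  refine Set.ncard_congr (fun b _ => f b) ?_ ?_ ?_
  · intro b hb
    have h := hσ b hb _ (hf b hb)
    simp only [Finset.coe_filter, Finite.mem_toFinset, mem_ofPred_eq]
    exact ⟨(hu.1 b hb).2 (hf b hb), hfmax b hb _ h.1⟩
  · intro a b ha hb hab
    have h := hf b hb
    rw [← hab] at h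
    exact hu.eq_of_mem ha hb (hf a ha) h
  · intro z hz
    simp only [Finset.coe_filter, Finite.mem_toFinset, mem_ofPred_eq] at hz
    obtain ⟨b, ⟨hb, hzb⟩, -⟩ := hu.2 z hz.1
    refine ⟨b, hb, ?_⟩
    have hbX := (hu.1 b hb).2
    refine hι (hbX (hf b hb)) hz.1 (le_antisymm ?_ (hfmax b hb z hzb))
    rcases (hσ b hb z hzb).2 with h | h
    · omega
    · exact (h.2 _ (hf b hb)).2

/-- Counting blocks in a factorization `σ_w ∘ σ_u = σ_v` of successor maps with `u` finer
than `v`. -/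
theorem krew_count {X : Set ℂ} (hX : X.Finite) {ι : ℂ → ℕ} (hι : CcwNumbering X ι)
    {u v w : Set (Set ℂ)} (hu : IsPartitionOf X u) (hv : IsPartitionOf X v)
    (hw : IsPartitionOf X w) (h : KrewRel X u v w) :
    u.ncard + w.ncard = X.ncard + v.ncard := by
  obtain ⟨huv, -, σu, σv, σw, hσu, hσv, hσw, hcomp⟩ := h
  have cu := fun b hb z hz => cycSucc_of_succMap hι hu hσu (b := b) hb (z := z) hz
  have cv := fun b hb z hz => cycSucc_of_succMap hι hv hσv (b := b) hb (z := z) hz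
  have cw := fun b hb z hz => cycSucc_of_succMap hι hw hσw (b := b) hb (z := z) hz
  rw [ncard_eq_card_wrap hX hι.1 hu cu, ncard_eq_card_wrap hX hι.1 hv cv,
    ncard_eq_card_wrap hX hι.1 hw cw, Set.ncard_eq_toFinset_card X hX]
  have hmap : ∀ z ∈ X, σu z ∈ X := fun z hz => by
    obtain ⟨b, ⟨hb, hzb⟩, -⟩ := hu.2 z hz
    exact (hu.1 b hb).2 (cu b hb z hzb).1
  have hinj : InjOn σu X := by
    intro y hy z hz hyz
    obtain ⟨b, ⟨hb, hyb⟩, -⟩ := hu.2 y hy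
    obtain ⟨c, ⟨hc, hzc⟩, -⟩ := hu.2 z hz
    have h1 := cu b hb y hyb
    have h2 := cu c hc z hzc
    have hbc : b = c := hu.eq_of_mem hb hc h1.1 (hyz ▸ h2.1)
    subst hbc
    apply hι.1 hy hz
    rw [← hyz] at h2
    rcases h1.2 with h3 | h3 <;> rcases h2.2 with h4 | h4
    · have := h3.2 z hzc; have := h4.2 y hyb; omega
    · have := h3.2 z hzc; have := h4.2 y hyb; omega
    · have := h3.2 z hzc; have := h4.2 y hyb; omega
    · have := h3.2 z hzc; have := h4.2 y hyb; omega
  have hsurj : ∀ y ∈ hX.toFinset, ∃ z ∈ hX.toFinset, σu z = y := by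
    have := Finset.surjOn_of_injOn_of_card_le (s := hX.toFinset) (t := hX.toFinset) σu
      (by intro z hz; simpa using hmap z (by simpa using hz)) (by simpa using hinj) le_rfl
    intro y hy
    obtain ⟨z, hz, rfl⟩ := this hy
    exact ⟨z, hz, rfl⟩
  have hreindex : ∑ z ∈ hX.toFinset, (if ι (σw (σu z)) ≤ ι (σu z) then 1 else 0) =
      ∑ z ∈ hX.toFinset, (if ι (σw z) ≤ ι z then 1 else 0) := by
    refine Finset.sum_bij (fun z _ => σu z) ?_ ?_ ?_ ?_
    · intro z hz; simpa using hmap z (by simpa using hz)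
    · intro y hy z hz; exact hinj (by simpa using hy) (by simpa using hz)
    · intro y hy
      obtain ⟨z, hz, h⟩ := hsurj y hy
      exact ⟨z, hz, h⟩
    · intros; rfl
  rw [Finset.card_filter, Finset.card_filter, Finset.card_filter, Finset.card_eq_sum_ones,
    ← hreindex, ← Finset.sum_add_distrib, ← Finset.sum_add_distrib]
  refine Finset.sum_congr rfl fun z hz => ?_
  have hzX : z ∈ X := by simpa using hz
  rw [hcomp z hzX]
  obtain ⟨a, ⟨ha, hza⟩, -⟩ := hu.2 z hzX
  obtain ⟨b, hb, hab⟩ := huv a ha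
  have h1 := cv b hb z (hab hza)
  -- In the cyclic order, `σ_u z` lies in the block of `z` in `v`, hence not before `σ_v z`.
  have h2 : σu z ∈ b := hab (cu a ha z hza).1
  rcases h1.2 with h3 | h3
  · have h4 := h3.2 _ h2
    split_ifs <;> omega
  · have h4 := h3.2 _ h2
    split_ifs <;> omega

/-! ### The points `mu N` and `azeta e n ζ` in counterclockwise order -/

theorem exists_ccwNumbering (p : ℕ → ℂ) (M : ℕ) (hinj : InjOn p (Iio M))
    (hor : ∀ i j k, i < j → j < k → k < M → 0 < orient (p i) (p j) (p k)) :
    ∃ ι, CcwNumbering (p '' Iio M) ι := by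
  refine ⟨Function.invFunOn p (Iio M), ?_, ?_⟩
  · rintro _ ⟨i, hi, rfl⟩ _ ⟨j, hj, rfl⟩ h
    rw [hinj.leftInvOn_invFunOn hi, hinj.leftInvOn_invFunOn hj] at h
    rw [h]
  · rintro _ ⟨i, hi, rfl⟩ _ ⟨j, hj, rfl⟩ _ ⟨k, hk, rfl⟩ h1 h2
    rw [hinj.leftInvOn_invFunOn hi, hinj.leftInvOn_invFunOn hj] at h1
    rw [hinj.leftInvOn_invFunOn hk, hinj.leftInvOn_invFunOn hj] at h2
    exact hor i j k h1 h2 hk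

theorem zeta_prim {N : ℕ} (hN : N ≠ 0) : IsPrimitiveRoot (zeta N) N :=
  Complex.isPrimitiveRoot_exp N hN

theorem zeta_pow_eq (N k : ℕ) :
    zeta N ^ k = Complex.exp (((2 * Real.pi * k / N : ℝ) : ℂ) * Complex.I) := by
  rw [zeta, ← Complex.exp_nat_mul]
  congr 1
  push_cast
  ring

theorem zeta_pow_re (N k : ℕ) : (zeta N ^ k).re = Real.cos (2 * Real.pi * k / N) := by
  rw [zeta_pow_eq, Complex.exp_ofReal_mul_I_re]

theorem zeta_pow_im (N k : ℕ) : (zeta N ^ k).im = Real.sin (2 * Real.pi * k / N) := by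
  rw [zeta_pow_eq, Complex.exp_ofReal_mul_I_im]

/-- The double area of a triangle inscribed in the unit circle, at the angles `α`, `α + 2x` and
`α + 2x + 2y`. -/
theorem orient_circle (α x y : ℝ) (z z' w : ℂ) (h1 : z.re = Real.cos α) (h2 : z.im = Real.sin α)
    (h3 : z'.re = Real.cos (α + 2 * x)) (h4 : z'.im = Real.sin (α + 2 * x))
    (h5 : w.re = Real.cos (α + 2 * x + 2 * y)) (h6 : w.im = Real.sin (α + 2 * x + 2 * y)) :
    orient z z' w = 4 * Real.sin x * Real.sin y * Real.sin (x + y) := by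
  simp only [orient, Complex.sub_re, Complex.sub_im, h1, h2, h3, h4, h5, h6]
  simp only [Real.cos_add, Real.sin_add, Real.cos_two_mul, Real.sin_two_mul]
  have e1 := Real.sin_sq_add_cos_sq α
  have e2 := Real.sin_sq_add_cos_sq x
  have e3 := Real.sin_sq_add_cos_sq y
  generalize Real.sin α = sa at *
  generalize Real.cos α = ca at *
  generalize Real.sin x = sx at *
  generalize Real.cos x = cx at *
  generalize Real.sin y = sy at *
  generalize Real.cos y = cy at *
  have f1 : sa ^ 2 = 1 - ca ^ 2 := by linarith
  have f2 : sx ^ 2 = 1 - cx ^ 2 := by linarith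
  have f3 : sy ^ 2 = 1 - cy ^ 2 := by linarith
  grind

theorem orient_zeta {N i j k : ℕ} (hij : i < j) (hjk : j < k) (hki : k < i + N) :
    0 < orient (zeta N ^ i) (zeta N ^ j) (zeta N ^ k) := by
  have hN : (0 : ℝ) < N := by
    have : 0 < N := by omega
    exact_mod_cast this
  have hpi := Real.pi_pos
  have hij' : (i : ℝ) < j := by exact_mod_cast hij
  have hjk' : (j : ℝ) < k := by exact_mod_cast hjk
  have hki' : (k : ℝ) < i + N := by exact_mod_cast hki
  have key : ∀ t : ℝ, 0 < t → t < N → 0 < Real.sin (Real.pi * t / N) := by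
    intro t h0 h1
    apply Real.sin_pos_of_pos_of_lt_pi
    · positivity
    · rw [div_lt_iff₀ hN]
      exact mul_lt_mul_of_pos_left h1 hpi
  rw [orient_circle (2 * Real.pi * i / N) (Real.pi * (j - i : ℝ) / N) (Real.pi * (k - j : ℝ) / N)
    _ _ _ (zeta_pow_re N i) (zeta_pow_im N i)
    (by rw [zeta_pow_re]; congr 1; field_simp; ring) (by rw [zeta_pow_im]; congr 1; field_simp; ring)
    (by rw [zeta_pow_re]; congr 1; field_simp; ring) (by rw [zeta_pow_im]; congr 1; field_simp; ring)]
  have s1 := key (j - i) (by linarith) (by linarith)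
  have s2 := key (k - j) (by linarith) (by linarith)
  have s3 := key (k - i) (by linarith) (by linarith)
  have e : Real.pi * (j - i : ℝ) / N + Real.pi * (k - j : ℝ) / N = Real.pi * (k - i : ℝ) / N := by
    ring
  rw [e]
  positivity

theorem orient_zero_zeta {N j k : ℕ} (hjk : j < k) (hkj : 2 * (k - j) < N) :
    0 < orient 0 (zeta N ^ j) (zeta N ^ k) := by
  have hN : (0 : ℝ) < N := by
    have : 0 < N := by omega
    exact_mod_cast this
  have hpi := Real.pi_pos
  have hjk' : (j : ℝ) < k := by exact_mod_cast hjk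
  have hkj' : 2 * ((k : ℝ) - j) < N := by
    rw [← Nat.cast_sub hjk.le]; exact_mod_cast hkj
  have : orient 0 (zeta N ^ j) (zeta N ^ k) = Real.sin (2 * Real.pi * k / N - 2 * Real.pi * j / N) := by
    simp only [orient, sub_zero, zeta_pow_re, zeta_pow_im, Real.sin_sub]
    ring
  rw [this, show 2 * Real.pi * k / N - 2 * Real.pi * j / N = Real.pi * (2 * ((k : ℝ) - j)) / N by ring]
  apply Real.sin_pos_of_pos_of_lt_pi
  · have : 0 < (k : ℝ) - j := by linarith
    positivity
  · rw [div_lt_iff₀ hN]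
    exact mul_lt_mul_of_pos_left hkj' hpi

theorem mu_eq_image {N : ℕ} (hN : N ≠ 0) : mu N = (fun k => zeta N ^ k) '' Iio N := by
  have : NeZero N := ⟨hN⟩
  ext z
  constructor
  · intro hz
    obtain ⟨i, hi, h⟩ := (zeta_prim hN).eq_pow_of_pow_eq_one hz
    exact ⟨i, hi, h⟩
  · rintro ⟨i, -, rfl⟩
    show (zeta N ^ i) ^ N = 1
    rw [← pow_mul, mul_comm, pow_mul, (zeta_prim hN).pow_eq_one, one_pow]

theorem zeta_pow_injOn {N : ℕ} (hN : N ≠ 0) : InjOn (fun k => zeta N ^ k) (Iio N) :=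
  fun _ hi _ hj h => (zeta_prim hN).pow_inj hi hj h

theorem mu_finite {N : ℕ} (hN : N ≠ 0) : (mu N).Finite := by
  rw [mu_eq_image hN]; exact (finite_Iio N).image _

theorem mu_ncard {N : ℕ} (hN : N ≠ 0) : (mu N).ncard = N := by
  rw [mu_eq_image hN, (zeta_pow_injOn hN).ncard_image]
  simp

/-- Block count for the Kreweras complement on `mu N`. -/
theorem krew_count_mu {N : ℕ} (hN : N ≠ 0) {u v w : Set (Set ℂ)} (hu : IsPartitionOf (mu N) u)
    (hv : IsPartitionOf (mu N) v) (hw : IsPartitionOf (mu N) w) (h : KrewRel (mu N) u v w) :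
    u.ncard + w.ncard = N + v.ncard := by
  obtain ⟨ι, hι⟩ := exists_ccwNumbering (fun k => zeta N ^ k) N (zeta_pow_injOn hN)
    (fun i j k hij hjk hk => orient_zeta hij hjk (by omega))
  rw [← mu_eq_image hN] at hι
  rw [krew_count (mu_finite hN) hι hu hv hw h, mu_ncard hN]

/-- The points of `azeta e n (zeta (e * n) ^ l)` in counterclockwise order, starting with `0`. -/
def azetaPt (e n l k : ℕ) : ℂ := if k = 0 then 0 else zeta (e * n) ^ (k + l)

theorem azeta_eq_image (e n l : ℕ) :
    azeta e n (zeta (e * n) ^ l) = azetaPt e n l '' Iio (n + 1) := by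
  ext z
  constructor
  · rintro (rfl | ⟨k, hk, hkn, rfl⟩)
    · exact ⟨0, by simp, by simp [azetaPt]⟩
    · exact ⟨k, by simp; omega, by rw [azetaPt, if_neg (by omega), pow_add]⟩
  · rintro ⟨k, hk, rfl⟩
    rw [mem_Iio] at hk
    rcases Nat.eq_zero_or_pos k with rfl | h
    · left; simp [azetaPt]
    · exact Or.inr ⟨k, h, by omega, by rw [azetaPt, if_neg (by omega), pow_add]⟩

theorem azetaPt_injOn {e n : ℕ} (he : 2 ≤ e) (hn : 0 < n) (l : ℕ) :
    InjOn (azetaPt e n l) (Iio (n + 1)) := by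
  have hN : e * n ≠ 0 := by positivity
  have hne : ∀ m, zeta (e * n) ^ m ≠ 0 := fun m => pow_ne_zero _ ((zeta_prim hN).ne_zero hN)
  have hlt : 2 * n ≤ e * n := Nat.mul_le_mul_right n he
  intro i hi j hj h
  rw [mem_Iio] at hi hj
  by_cases hi0 : i = 0 <;> by_cases hj0 : j = 0
  · omega
  · simp [azetaPt, hi0, hj0, (hne _).symm] at h
  · simp [azetaPt, hi0, hj0, hne] at h
  · simp only [azetaPt, hi0, hj0, if_false, pow_add] at h
    exact (zeta_prim hN).pow_inj (by omega) (by omega) (mul_right_cancel₀ (hne l) h)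

/-- Block count for the Kreweras complement on the `n + 1` points of `azeta e n ζ`, which are in
convex position because for `e ≥ 2` the nonzero ones span less than half of the circle. -/
theorem krew_count_azeta {e n : ℕ} (he : 2 ≤ e) (hn : 0 < n) {ζ : ℂ} (hζ : ζ ^ (e * n) = 1)
    {u v w : Set (Set ℂ)} (hu : IsPartitionOf (azeta e n ζ) u)
    (hv : IsPartitionOf (azeta e n ζ) v) (hw : IsPartitionOf (azeta e n ζ) w)
    (h : KrewRel (azeta e n ζ) u v w) : u.ncard + w.ncard = n + 1 + v.ncard := by
  have hN : e * n ≠ 0 := by positivity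
  have hlt : 2 * n ≤ e * n := Nat.mul_le_mul_right n he
  obtain ⟨l, -, rfl⟩ : ζ ∈ (fun k => zeta (e * n) ^ k) '' Iio (e * n) := mu_eq_image hN ▸ hζ
  obtain ⟨ι, hι⟩ := exists_ccwNumbering (azetaPt e n l) (n + 1) (azetaPt_injOn he hn l) (by
    intro i j k hij hjk hk
    rcases Nat.eq_zero_or_pos i with rfl | hi
    · rw [azetaPt, azetaPt, azetaPt, if_pos rfl, if_neg (by omega), if_neg (by omega)]
      exact orient_zero_zeta (by omega) (by omega)
    · rw [azetaPt, azetaPt, azetaPt, if_neg (by omega), if_neg (by omega), if_neg (by omega)]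
      exact orient_zeta (by omega) (by omega) (by omega))
  have hcard : (azeta e n (zeta (e * n) ^ l)).ncard = n + 1 := by
    rw [azeta_eq_image, (azetaPt_injOn he hn l).ncard_image]
    simp
  have hfin : (azeta e n (zeta (e * n) ^ l)).Finite := by
    rw [azeta_eq_image]; exact (finite_Iio _).image _
  rw [← azeta_eq_image] at hι
  rw [krew_count hfin hι hu hv hw h, hcard]

/-! ### Rotation of parts and the action of the roots of unity -/

/-- The image of `b` under multiplication by `c`; thus `rotate c u` is the image of `u` under
`dil c`. -/
def dil (c : ℂ) (b : Set ℂ) : Set ℂ := (fun z => c * z) '' b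

theorem mul_mem_dil {c z : ℂ} {b : Set ℂ} (h : z ∈ b) : c * z ∈ dil c b := ⟨z, h, rfl⟩

theorem dil_dil (c d : ℂ) (b : Set ℂ) : dil c (dil d b) = dil (c * d) b := by
  simp only [dil, image_image, mul_assoc]

theorem dil_one (b : Set ℂ) : dil 1 b = b := by simp [dil]

theorem ne_zero_of_pow_one {e : ℕ} (he : e ≠ 0) {c : ℂ} (hc : c ^ e = 1) : c ≠ 0 := by
  rintro rfl
  rw [zero_pow he] at hc
  exact zero_ne_one hc

theorem inv_pow_one {e : ℕ} {c : ℂ} (hc : c ^ e = 1) : c⁻¹ ^ e = 1 := by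
  rw [inv_pow, hc, inv_one]

theorem dil_inv_dil {c : ℂ} (hc : c ≠ 0) (b : Set ℂ) : dil c⁻¹ (dil c b) = b := by
  rw [dil_dil, inv_mul_cancel₀ hc, dil_one]

theorem dil_dil_inv {c : ℂ} (hc : c ≠ 0) (b : Set ℂ) : dil c (dil c⁻¹ b) = b := by
  rw [dil_dil, mul_inv_cancel₀ hc, dil_one]

theorem mul_mem_convexHull_dil {c z : ℂ} {b : Set ℂ} (h : z ∈ convexHull ℝ b) :
    c * z ∈ convexHull ℝ (dil c b) := by
  have := (LinearMap.mulLeft ℝ c).image_convexHull b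
  have h2 : c * z ∈ (LinearMap.mulLeft ℝ c) '' convexHull ℝ b := ⟨z, h, rfl⟩
  rw [this] at h2
  exact h2

/-- A nonempty set stable under a nontrivial rotation of finite order has the centre of rotation
in its convex hull. -/
theorem zero_mem_of_dil_eq {e : ℕ} (he : e ≠ 0) {c : ℂ} (hc : c ^ e = 1) (hc1 : c ≠ 1) {b : Set ℂ}
    (hb : b.Nonempty) (h : dil c b = b) : (0 : ℂ) ∈ convexHull ℝ b := by
  obtain ⟨z, hz⟩ := hb
  have hmem : ∀ k : ℕ, c ^ k * z ∈ b := by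
    intro k
    induction k with
    | zero => simpa using hz
    | succ k ih =>
      have := mul_mem_dil (c := c) ih
      rw [h, ← mul_assoc, ← pow_succ'] at this
      exact this
  have he' : (e : ℝ) ≠ 0 := by exact_mod_cast he
  have hs : ∑ k ∈ Finset.range e, c ^ k = 0 := by
    rw [geom_sum_eq hc1, hc, sub_self, zero_div]
  have := (convex_convexHull ℝ b).sum_mem (t := Finset.range e) (w := fun _ => (e : ℝ)⁻¹)
    (z := fun k => c ^ k * z) (fun _ _ => by positivity) (by simp [he'])
    (fun k _ => subset_convexHull ℝ b (hmem k))
  rwa [← Finset.smul_sum, ← Finset.sum_mul, hs, zero_mul, smul_zero] at this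

/-- If `T` is a transversal for a free action of the `e`-th roots of unity on `S`, then
`S` has `e` times as many elements as `T`. -/
theorem ncard_eq_of_transversal {e : ℕ} (he : e ≠ 0) {S T : Set (Set ℂ)}
    (hST : ∀ c : ℂ, c ^ e = 1 → ∀ t ∈ T, dil c t ∈ S)
    (hex : ∀ b ∈ S, ∃ c : ℂ, c ^ e = 1 ∧ dil c b ∈ T)
    (huniq : ∀ c : ℂ, c ^ e = 1 → ∀ t ∈ T, dil c t ∈ T → c = 1) :
    S.ncard = e * T.ncard := by
  have hS : S = (fun q : ℂ × Set ℂ => dil q.1 q.2) '' (mu e ×ˢ T) := by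
    ext b
    constructor
    · intro hb
      obtain ⟨c, hc, hcT⟩ := hex b hb
      exact ⟨(c⁻¹, dil c b), ⟨inv_pow_one hc, hcT⟩, dil_inv_dil (ne_zero_of_pow_one he hc) b⟩
    · rintro ⟨⟨c, t⟩, ⟨hc, ht⟩, rfl⟩
      exact hST c hc t ht
  have hinj : InjOn (fun q : ℂ × Set ℂ => dil q.1 q.2) (mu e ×ˢ T) := by
    rintro ⟨c, s⟩ ⟨hc, hs⟩ ⟨d, t⟩ ⟨hd, ht⟩ h
    simp only at hc hs hd ht h
    have hd0 := ne_zero_of_pow_one he hd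
    have h1 : dil (d⁻¹ * c) s = t := by rw [← dil_dil, h, dil_inv_dil hd0]
    have h2 : d⁻¹ * c = 1 := by
      apply huniq _ _ s hs (h1 ▸ ht)
      rw [mul_pow, inv_pow_one hd, one_mul]
      exact hc
    rw [h2, dil_one] at h1
    have h3 : c = d := by
      rw [inv_mul_eq_one₀ hd0] at h2
      exact h2.symm
    rw [h1, h3]
  rw [hS, hinj.ncard_image, Set.ncard_prod, mu_ncard he]

/-- A free action of the `e`-th roots of unity on `S` makes `e` divide the number of elements. -/
theorem dvd_ncard_of_free {e : ℕ} (he : e ≠ 0) {S : Set (Set ℂ)}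
    (hS : ∀ c : ℂ, c ^ e = 1 → ∀ b ∈ S, dil c b ∈ S)
    (hfree : ∀ c : ℂ, c ^ e = 1 → ∀ b ∈ S, dil c b = b → c = 1) : ∃ q, S.ncard = e * q := by
  -- `r` selects one set in the orbit of each set.
  let orb : Set ℂ → Set (Set ℂ) := fun b => (fun c => dil c b) '' mu e
  have hself : ∀ b, b ∈ orb b := fun b => ⟨1, one_pow e, dil_one b⟩
  have horb : ∀ c : ℂ, c ^ e = 1 → ∀ b, orb (dil c b) = orb b := by
    intro c hc b
    have hc0 := ne_zero_of_pow_one he hc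
    ext s
    constructor
    · rintro ⟨d, hd, rfl⟩
      refine ⟨d * c, ?_, (dil_dil d c b).symm⟩
      show (d * c) ^ e = 1
      rw [mul_pow, hc, mul_one]; exact hd
    · rintro ⟨d, hd, rfl⟩
      refine ⟨d * c⁻¹, ?_, ?_⟩
      · show (d * c⁻¹) ^ e = 1
        rw [mul_pow, inv_pow_one hc, mul_one]; exact hd
      · show dil _ _ = dil _ _
        rw [dil_dil, mul_assoc, inv_mul_cancel₀ hc0, mul_one]
  let r : Set (Set ℂ) → Set ℂ := fun O => if h : O.Nonempty then h.some else ∅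
  have hr : ∀ b, r (orb b) ∈ orb b := by
    intro b
    have h : (orb b).Nonempty := ⟨b, hself b⟩
    simp only [r, dif_pos h]
    exact h.some_mem
  refine ⟨{b ∈ S | r (orb b) = b}.ncard, ncard_eq_of_transversal he ?_ ?_ ?_⟩
  · exact fun c hc t ht => hS c hc t ht.1
  · intro b hb
    obtain ⟨c, hc, h⟩ := hr b
    refine ⟨c, hc, hS c hc b hb, ?_⟩
    rw [horb c hc b]
    exact h.symm
  · intro c hc t ht h
    apply hfree c hc t ht.1
    have h2 := h.2
    rw [horb c hc t, ht.2] at h2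
    exact h2.symm

theorem IsPartitionOf.resTo {X Y : Set ℂ} {u : Set (Set ℂ)} (hu : IsPartitionOf Y u)
    (hXY : X ⊆ Y) : IsPartitionOf X (resTo X u) := by
  refine ⟨?_, ?_⟩
  · rintro _ ⟨hne, a, -, rfl⟩
    exact ⟨hne, inter_subset_right⟩
  · intro z hz
    obtain ⟨a, ⟨ha, hza⟩, -⟩ := hu.2 z (hXY hz)
    refine ⟨a ∩ X, ⟨⟨⟨z, hza, hz⟩, a, ha, rfl⟩, hza, hz⟩, ?_⟩
    rintro _ ⟨⟨-, b, hb, rfl⟩, hzb, -⟩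
    rw [hu.eq_of_mem ha hb hza hzb]

/-- Forgetting `0` only removes the part `{0}`, if it is there. -/
theorem ncard_flat {X : Set ℂ} {u : Set (Set ℂ)} (hu : IsPartitionOf X u) :
    (flatNCP u).ncard = (u \ {{0}}).ncard := by
  symm
  refine Set.ncard_congr (fun a _ => a \ {0}) ?_ ?_ ?_
  · rintro a ⟨ha, ha0⟩
    refine ⟨?_, a, ha, rfl⟩
    rw [nonempty_iff_ne_empty, Ne, sdiff_eq_empty, (hu.1 a ha).1.subset_singleton_iff]
    exact ha0
  · rintro a b ⟨ha, ha0⟩ ⟨hb, hb0⟩ hab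
    obtain ⟨z, hz⟩ : (a \ {0}).Nonempty := by
      rw [nonempty_iff_ne_empty, Ne, sdiff_eq_empty, (hu.1 a ha).1.subset_singleton_iff]
      exact ha0
    have hz' : z ∈ b \ {0} := by simpa only [← hab] using hz
    exact hu.eq_of_mem ha hb hz.1 hz'.1
  · rintro _ ⟨hne, a, ha, rfl⟩
    refine ⟨a, ⟨ha, ?_⟩, rfl⟩
    rintro rfl
    simp at hne

theorem ncard_of_zero_mem {X : Set ℂ} (hX : X.Finite) {u : Set (Set ℂ)} (hu : IsPartitionOf X u)
    (h0 : {0} ∈ u) : u.ncard = (flatNCP u).ncard + 1 := by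
  rw [ncard_flat hu, Set.ncard_sdiff_singleton_add_one h0 (hu.finite hX)]

theorem ncard_of_zero_notMem {X : Set ℂ} {u : Set (Set ℂ)} (hu : IsPartitionOf X u)
    (h0 : {0} ∉ u) : u.ncard = (flatNCP u).ncard := by
  rw [ncard_flat hu, sdiff_singleton_eq_self h0]

theorem zero_notMem_mu {N : ℕ} (hN : N ≠ 0) : (0 : ℂ) ∉ mu N := fun h => ne_zero_of_pow_one hN h rfl

/-! ### Heights and symmetric partitions -/

theorem flat_partition {e n : ℕ} (hN : e * n ≠ 0) {x : Set (Set ℂ)} (hx : x ∈ NCPee e n) :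
    IsPartitionOf (mu (e * n)) (flatNCP x) := by
  refine ⟨?_, ?_⟩
  · rintro _ ⟨hne, a, ha, rfl⟩
    refine ⟨hne, fun z hz => ?_⟩
    rcases (hx.1.1 a ha).2 hz.1 with h | h
    · exact absurd h hz.2
    · exact h
  · intro z hz
    have hz0 : z ≠ 0 := ne_zero_of_pow_one hN hz
    obtain ⟨a, ⟨ha, hza⟩, -⟩ := hx.1.2 z (Or.inr hz)
    refine ⟨a \ {0}, ⟨⟨⟨z, hza, hz0⟩, a, ha, rfl⟩, hza, hz0⟩, ?_⟩
    rintro _ ⟨⟨-, b, hb, rfl⟩, hzb, -⟩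
    rw [hx.1.eq_of_mem ha hb hza hzb]

theorem flat_dil {e n : ℕ} {x : Set (Set ℂ)} (hx : x ∈ NCPee e n) {c : ℂ} (hc : c ^ e = 1)
    {b : Set ℂ} (hb : b ∈ flatNCP x) : dil c b ∈ flatNCP x := by
  have h := hx.2.2 c hc
  rw [← h]
  exact ⟨b, hb, rfl⟩

/-- If the part `p` contains `0` and `ζ`, then any part of the flat whose convex hull meets a
rotate of the segment from `0` to `ζ` is the corresponding rotate of `p \ {0}`. -/
theorem eq_dil_of_ray {e n : ℕ} (he : e ≠ 0) {x : Set (Set ℂ)} (hx : x ∈ NCPee e n) {p : Set ℂ}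
    (hp : p ∈ x) (h0 : (0 : ℂ) ∈ p) {ζ : ℂ} (hζ : ζ ∈ p) {c : ℂ} (hc : c ^ e = 1) {b : Set ℂ}
    (hb : b ∈ flatNCP x) {t : ℝ} (ht0 : 0 ≤ t) (ht1 : t ≤ 1)
    (ht : (t : ℂ) * (c * ζ) ∈ convexHull ℝ b) : b = dil c (p \ {0}) := by
  have hc0 := ne_zero_of_pow_one he hc
  have hb1 := flat_dil hx (inv_pow_one hc) hb
  have ht' := mul_mem_convexHull_dil (c := c⁻¹) ht
  have hcalc : c⁻¹ * ((t : ℂ) * (c * ζ)) = t * ζ := by field_simp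
  rw [hcalc] at ht'
  have hne := ((flat_dil hx (inv_pow_one hc) hb : dil c⁻¹ b ∈ flatNCP x))
  obtain ⟨-, a, ha, hba⟩ := hne
  have hpt : (t : ℂ) * ζ ∈ convexHull ℝ p := by
    have := (convex_convexHull ℝ p) (subset_convexHull ℝ p h0) (subset_convexHull ℝ p hζ)
      (sub_nonneg.2 ht1) ht0 (by ring)
    simpa using this
  have hat : (t : ℂ) * ζ ∈ convexHull ℝ a :=
    convexHull_mono (hba ▸ sdiff_subset) ht'
  have hap : a = p := hx.2.1 a ha p hp ⟨_, hat, hpt⟩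
  rw [← dil_dil_inv hc0 b, hba, hap]

theorem exists_zero_part {e n : ℕ} {x : Set (Set ℂ)} (hx : x ∈ NCPee e n) :
    ∃ p ∈ x, (0 : ℂ) ∈ p := by
  obtain ⟨p, ⟨hp, h0⟩, -⟩ := hx.1.2 0 (Or.inl rfl)
  exact ⟨p, hp, h0⟩

/-- A part of the flat with `0` in its convex hull is the part of `0` with `0` removed, and is
stable under the `e`-th roots of unity. -/
theorem central_part {e n : ℕ} (he : e ≠ 0) {x : Set (Set ℂ)} (hx : x ∈ NCPee e n) {p : Set ℂ}
    (hp : p ∈ x) (h0 : (0 : ℂ) ∈ p) {b : Set ℂ} (hb : b ∈ flatNCP x)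
    (hb0 : (0 : ℂ) ∈ convexHull ℝ b) {c : ℂ} (hc : c ^ e = 1) : b = dil c (p \ {0}) :=
  eq_dil_of_ray he hx hp h0 h0 hc hb le_rfl zero_le_one (by simpa using hb0)

theorem not_long_of_zero_mem {e n : ℕ} (he : e ≠ 0) {x : Set (Set ℂ)} (hx : x ∈ NCPee e n)
    (h0 : {0} ∈ x) : ¬ IsLong (flatNCP x) := by
  rintro ⟨b, hb, hb0⟩
  have h := central_part he hx h0 rfl hb hb0 (one_pow e)
  obtain ⟨hne, -⟩ := hb
  rw [h] at hne
  simp [dil] at hne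

theorem free_of_not_long {e : ℕ} (he : e ≠ 0) {x : Set (Set ℂ)} (hl : ¬ IsLong (flatNCP x))
    {b : Set ℂ} (hb : b ∈ flatNCP x) {c : ℂ} (hc : c ^ e = 1) (h : dil c b = b) : c = 1 := by
  by_contra hc1
  exact hl ⟨b, hb, zero_mem_of_dil_eq he hc hc1 hb.1 h⟩

theorem ht_short {e n : ℕ} (he : e ≠ 0) (hN : e * n ≠ 0) {x : Set (Set ℂ)} (hx : x ∈ NCPee e n)
    (h0 : {0} ∈ x) {q : ℕ} (hq : (flatNCP x).ncard = e * q) : htEE e n x = n - q := by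
  have he' : (e : ℤ) ≠ 0 := by exact_mod_cast he
  rw [htEE, if_pos h0, ncard_of_zero_mem ((mu_finite hN).insert 0) hx.1 h0, hq]
  push_cast
  rw [add_sub_cancel_right, Int.mul_ediv_cancel_left _ he']

theorem ht_long {e n : ℕ} (he : e ≠ 0) {x : Set (Set ℂ)} (hx : x ∈ NCPee e n)
    (hl : IsLong (flatNCP x)) {q : ℕ} (hq : (flatNCP x).ncard = e * q + 1) :
    htEE e n x = n + 1 - q := by
  have he' : (e : ℤ) ≠ 0 := by exact_mod_cast he
  have h0 : {0} ∉ x := fun h0 => not_long_of_zero_mem he hx h0 hl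
  rw [htEE, if_neg h0, if_pos hl, ncard_of_zero_notMem hx.1 h0, hq]
  push_cast
  rw [add_sub_cancel_right, Int.mul_ediv_cancel_left _ he']

theorem ht_asym {e n : ℕ} (he : e ≠ 0) {x : Set (Set ℂ)} (hx : x ∈ NCPee e n)
    (h0 : {0} ∉ x) (hl : ¬ IsLong (flatNCP x)) {q : ℕ} (hq : (flatNCP x).ncard = e * q) :
    htEE e n x = n + 1 - q := by
  have he' : (e : ℤ) ≠ 0 := by exact_mod_cast he
  rw [htEE, if_neg h0, if_neg hl, ncard_of_zero_notMem hx.1 h0, hq]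
  push_cast
  rw [Int.mul_ediv_cancel_left _ he']

/-- Height of a symmetric partition in terms of its flat; `s` records whether it is long. -/
theorem ht_symm {e n : ℕ} (he : e ≠ 0) (hN : e * n ≠ 0) {x : Set (Set ℂ)} (hx : x ∈ NCPee e n)
    (hs : SymmPart x) : ∃ q s : ℕ, (flatNCP x).ncard = e * q + s ∧ htEE e n x = n - q + s ∧
      (IsLong (flatNCP x) ∧ s = 1 ∨ ¬ IsLong (flatNCP x) ∧ s = 0) := by
  by_cases hl : IsLong (flatNCP x)
  · obtain ⟨p, hp, h0⟩ := exists_zero_part hx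
    obtain ⟨b, hb, hb0⟩ := hl
    have hfix : ∀ c : ℂ, c ^ e = 1 → dil c b = b := fun c hc => by
      have h1 := central_part he hx hp h0 hb hb0 (one_pow e)
      have h2 := central_part he hx hp h0 hb hb0 hc
      rw [dil_one] at h1
      rw [← h1] at h2
      exact h2.symm
    have hfin := (flat_partition hN hx).finite (mu_finite hN)
    obtain ⟨q, hq⟩ := dvd_ncard_of_free (S := flatNCP x \ {b}) he
      (fun c hc a ha => ⟨flat_dil hx hc ha.1, fun h => ha.2 (by
        rw [mem_singleton_iff] at h ⊢
        rw [← dil_inv_dil (ne_zero_of_pow_one he hc) a, h, hfix _ (inv_pow_one hc)])⟩)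
      (fun c hc a ha h => by
        by_contra hc1
        have ha0 := zero_mem_of_dil_eq he hc hc1 ha.1.1 h
        exact ha.2 ((central_part he hx hp h0 ha.1 ha0 hc).trans
          (central_part he hx hp h0 hb hb0 hc).symm))
    have hq' : (flatNCP x).ncard = e * q + 1 := by
      rw [← hq, Set.ncard_sdiff_singleton_add_one hb hfin]
    refine ⟨q, 1, hq', ?_, Or.inl ⟨⟨b, hb, hb0⟩, rfl⟩⟩
    rw [ht_long he hx ⟨b, hb, hb0⟩ hq']
    push_cast; ring
  · have h0 : {0} ∈ x := hs.resolve_right hl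
    obtain ⟨q, hq⟩ := dvd_ncard_of_free (S := flatNCP x) he
      (fun c hc b hb => flat_dil hx hc hb) (fun c hc b hb h => free_of_not_long he hl hb hc h)
    exact ⟨q, 0, hq, by rw [ht_short he hN hx h0 hq]; simp, Or.inr ⟨hl, rfl⟩⟩

theorem long_mono {u v : Set (Set ℂ)} (huv : Refines u v)
    (hl : IsLong (flatNCP u)) : IsLong (flatNCP v) := by
  obtain ⟨_, ⟨hne, a, ha, rfl⟩, h0⟩ := hl
  obtain ⟨b, hb, hab⟩ := huv a ha
  have hsub : a \ {0} ⊆ b \ {0} := sdiff_subset_sdiff_left hab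
  exact ⟨b \ {0}, ⟨hne.mono hsub, b, hb, rfl⟩, convexHull_mono hsub h0⟩

/-- The operation `starNCP` is a section of `flatNCP`. -/
theorem flat_star {e n : ℕ} (hN : e * n ≠ 0) {v w k : Set (Set ℂ)} (hv : v ∈ NCPee e n)
    (hw : w ∈ NCPee e n) (hk : Refines k (flatNCP v)) (hwk : w = starNCP k) : flatNCP w = k := by
  have h0k : ∀ a ∈ k, (0 : ℂ) ∉ a := fun a ha h0 => by
    obtain ⟨b, hb, hab⟩ := hk a ha
    exact zero_notMem_mu hN (((flat_partition hN hv).1 b hb).2 (hab h0))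
  by_cases hl : IsLong k
  · have hw' : w = {s | ∃ a ∈ k, s = if (0 : ℂ) ∈ convexHull ℝ a then insert 0 a else a} := by
      rw [hwk, starNCP, if_pos hl]
    have hdiff : ∀ a ∈ k, (if (0 : ℂ) ∈ convexHull ℝ a then insert 0 a else a) \ {0} = a := by
      intro a ha
      split_ifs
      · rw [insert_sdiff_of_mem _ (mem_singleton _), sdiff_singleton_eq_self (h0k a ha)]
      · exact sdiff_singleton_eq_self (h0k a ha)
    ext s
    constructor
    · rintro ⟨hne, _, ha, rfl⟩
      rw [hw'] at ha
      obtain ⟨a, ha, rfl⟩ := ha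
      rwa [hdiff a ha]
    · intro hs
      have hmem : (if (0 : ℂ) ∈ convexHull ℝ s then insert 0 s else s) ∈ w := by
        rw [hw']; exact ⟨s, hs, rfl⟩
      refine ⟨?_, _, hmem, (hdiff s hs).symm⟩
      rcases eq_empty_or_nonempty s with rfl | h
      · have := (hw.1.1 _ hmem).1
        simp at this
      · exact h
  · have hw' : w = insert {(0 : ℂ)} k := by rw [hwk, starNCP, if_neg hl]
    ext s
    constructor
    · rintro ⟨hne, a, ha, rfl⟩
      rw [hw'] at ha
      rcases ha with rfl | ha
      · simp at hne
      · rwa [sdiff_singleton_eq_self (h0k a ha)]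
    · intro hs
      have hmem : s ∈ w := by rw [hw']; exact Or.inr hs
      exact ⟨(hw.1.1 s hmem).1, s, hmem, (sdiff_singleton_eq_self (h0k s hs)).symm⟩

theorem symm_star {e n : ℕ} (hN : e * n ≠ 0) {v w k : Set (Set ℂ)} (hv : v ∈ NCPee e n)
    (hw : w ∈ NCPee e n) (hk : Refines k (flatNCP v)) (hwk : w = starNCP k) : SymmPart w := by
  by_cases hl : IsLong k
  · right
    rwa [flat_star hN hv hw hk hwk]
  · left
    rw [hwk, starNCP, if_neg hl]
    exact Or.inl rfl

/-- Additivity when both partitions are symmetric. -/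
theorem additive_symm {e n : ℕ} (he : 2 ≤ e) (hn : 0 < n) {u v w k : Set (Set ℂ)}
    (hu : u ∈ NCPee e n) (hv : v ∈ NCPee e n) (hw : w ∈ NCPee e n) (huv : Refines u v)
    (su : SymmPart u) (sv : SymmPart v) (hk : KrewRel (mu (e * n)) (flatNCP u) (flatNCP v) k)
    (hwk : w = starNCP k) : htEE e n u + htEE e n w = htEE e n v := by
  have hN : e * n ≠ 0 := by positivity
  have he0 : e ≠ 0 := by omega
  have sw := symm_star hN hv hw hk.2.1 hwk
  have hfl := flat_star hN hv hw hk.2.1 hwk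
  have hc := krew_count_mu hN (flat_partition hN hu) (flat_partition hN hv)
    (flat_partition hN hw) (hfl.symm ▸ hk)
  obtain ⟨qu, su', h1, h2, h3⟩ := ht_symm he0 hN hu su
  obtain ⟨qv, sv', h4, h5, h6⟩ := ht_symm he0 hN hv sv
  obtain ⟨qw, sw', h7, h8, h9⟩ := ht_symm he0 hN hw sw
  rw [h1, h4, h7] at hc
  rw [h2, h5, h8]
  -- The discrepancy `s_v - s_u - s_w` is divisible by `e ≥ 2`, and `-2` is impossible because
  -- coarsening preserves longness.
  have hdiv : (e : ℤ) * (qu + qw - n - qv) = (sv' : ℤ) - su' - sw' := by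
    have : ((e * qu + su' + (e * qw + sw') : ℕ) : ℤ) = ((e * n + (e * qv + sv') : ℕ) : ℤ) := by
      rw [hc]
    push_cast at this
    linarith
  have hle : su' ≤ sv' := by
    rcases h3 with h3 | h3
    · have := long_mono huv h3.1
      rcases h6 with h6 | h6
      · omega
      · exact absurd this h6.1
    · omega
  have hsu : su' ≤ 1 := by omega
  have hsv : sv' ≤ 1 := by omega
  have hsw : sw' ≤ 1 := by omega
  have he2 : (2 : ℤ) ≤ e := by exact_mod_cast he
  have hz : (qu + qw - n - qv : ℤ) = 0 := by
    rcases lt_trichotomy (qu + qw - n - qv : ℤ) 0 with h | h | h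
    · have : (e : ℤ) * (qu + qw - n - qv) ≤ -2 := by nlinarith
      omega
    · exact h
    · have : 2 ≤ (e : ℤ) * (qu + qw - n - qv) := by nlinarith
      omega
  rw [hz, mul_zero] at hdiv
  omega

/-! ### Partitions below `M_ζ` -/

/-- The points of `azeta e n ζ` other than `0`. -/
def arc (e n : ℕ) (ζ : ℂ) : Set ℂ := {z | ∃ k : ℕ, 1 ≤ k ∧ k ≤ n ∧ z = zeta (e * n) ^ k * ζ}

/-- The points of `arc e n ζ` strictly between `ζ` and its rotate `zeta (e * n) ^ n * ζ`. -/
def openArc (e n : ℕ) (ζ : ℂ) : Set ℂ := {z | ∃ k : ℕ, 1 ≤ k ∧ k < n ∧ z = zeta (e * n) ^ k * ζ}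

section Arc

variable {e n : ℕ} {ζ : ℂ}

theorem zeta_pow_n_pow (hN : e * n ≠ 0) : (zeta (e * n) ^ n) ^ e = 1 := by
  rw [← pow_mul, mul_comm n e, (zeta_prim hN).pow_eq_one]

theorem zeta_pow_n_ne_one (he : 2 ≤ e) (hn : 0 < n) : zeta (e * n) ^ n ≠ 1 := by
  have hN : e * n ≠ 0 := by positivity
  have hlt : 2 * n ≤ e * n := Nat.mul_le_mul_right n he
  exact (zeta_prim hN).pow_ne_one_of_pos_of_lt (by omega) (by omega)

theorem arc_subset_mu (hN : e * n ≠ 0) (hζ : ζ ^ (e * n) = 1) : arc e n ζ ⊆ mu (e * n) := by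
  rintro _ ⟨k, -, -, rfl⟩
  show (zeta (e * n) ^ k * ζ) ^ (e * n) = 1
  rw [mul_pow, hζ, mul_one, ← pow_mul, mul_comm k, pow_mul, (zeta_prim hN).pow_eq_one, one_pow]

theorem azeta_subset (hN : e * n ≠ 0) (hζ : ζ ^ (e * n) = 1) :
    azeta e n ζ ⊆ insert 0 (mu (e * n)) := insert_subset_insert (arc_subset_mu hN hζ)

theorem zero_notMem_arc (hN : e * n ≠ 0) (hζ : ζ ^ (e * n) = 1) : (0 : ℂ) ∉ arc e n ζ :=
  fun h => zero_notMem_mu hN (arc_subset_mu hN hζ h)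

theorem azeta_diff (hN : e * n ≠ 0) (hζ : ζ ^ (e * n) = 1) : azeta e n ζ \ {0} = arc e n ζ := by
  show insert 0 (arc e n ζ) \ {0} = arc e n ζ
  rw [insert_sdiff_of_mem _ (mem_singleton _),
    sdiff_singleton_eq_self (zero_notMem_arc hN hζ)]

theorem exists_pow_mul (hN : e * n ≠ 0) (hζ : ζ ^ (e * n) = 1) {z : ℂ} (hz : z ∈ mu (e * n)) :
    ∃ k, 1 ≤ k ∧ k ≤ e * n ∧ z = zeta (e * n) ^ k * ζ := by
  have hζ0 := ne_zero_of_pow_one hN hζ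
  have : z / ζ ∈ mu (e * n) := by
    show (z / ζ) ^ (e * n) = 1
    rw [div_pow, hζ, div_one]; exact hz
  rw [mu_eq_image hN] at this
  obtain ⟨k, hk, h⟩ := this
  simp only at h
  rw [eq_div_iff hζ0] at h
  rcases Nat.eq_zero_or_pos k with rfl | hk0
  · refine ⟨e * n, by omega, le_rfl, ?_⟩
    rw [(zeta_prim hN).pow_eq_one, ← h, pow_zero]
  · exact ⟨k, hk0, (le_of_lt hk), h.symm⟩

/-- The rotates of the arc cover the circle of points. -/
theorem exists_mul_mem_arc (hN : e * n ≠ 0) (hζ : ζ ^ (e * n) = 1) {z : ℂ} (hz : z ∈ mu (e * n)) :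
    ∃ c : ℂ, c ^ e = 1 ∧ c * z ∈ arc e n ζ := by
  obtain ⟨k, hk1, hk2, rfl⟩ := exists_pow_mul hN hζ hz
  have hn : 0 < n := Nat.pos_of_ne_zero (right_ne_zero_of_mul hN)
  have hc : ((zeta (e * n) ^ n) ^ ((k - 1) / n)) ^ e = 1 := by
    rw [← pow_mul, mul_comm _ e, pow_mul, zeta_pow_n_pow hN, one_pow]
  refine ⟨_, inv_pow_one hc, (k - 1) % n + 1, by omega, Nat.mod_lt _ hn, ?_⟩
  have hc0 : (zeta (e * n) ^ n) ^ ((k - 1) / n) ≠ 0 :=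
    pow_ne_zero _ (pow_ne_zero _ ((zeta_prim hN).ne_zero hN))
  have hk : k = n * ((k - 1) / n) + ((k - 1) % n + 1) := by
    have := Nat.div_add_mod (k - 1) n
    omega
  rw [← mul_assoc]
  congr 1
  rw [inv_mul_eq_iff_eq_mul₀ hc0, ← pow_mul, ← pow_add, ← hk]

/-- The rotates of the arc are disjoint. -/
theorem eq_one_of_mul_mem_arc (hN : e * n ≠ 0) (hζ : ζ ^ (e * n) = 1) {c z : ℂ} (hc : c ^ e = 1)
    (hz : z ∈ arc e n ζ) (hcz : c * z ∈ arc e n ζ) : c = 1 := by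
  obtain ⟨k, hk1, hk2, rfl⟩ := hz
  obtain ⟨l, hl1, hl2, h⟩ := hcz
  have hζ0 := ne_zero_of_pow_one hN hζ
  have hω := zeta_prim hN
  have hω0 := hω.ne_zero hN
  have he : e ≠ 0 := left_ne_zero_of_mul hN
  rw [← mul_assoc] at h
  have h1 : c * zeta (e * n) ^ k = zeta (e * n) ^ l := mul_right_cancel₀ hζ0 h
  have h2 : c = zeta (e * n) ^ ((l : ℤ) - k) := by
    rw [zpow_sub₀ hω0, zpow_natCast, zpow_natCast, eq_div_iff (pow_ne_zero _ hω0), h1]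
  have h3 : zeta (e * n) ^ (((l : ℤ) - k) * e) = 1 := by
    rw [zpow_mul, ← h2, zpow_natCast, hc]
  rw [hω.zpow_eq_one_iff_dvd] at h3
  have h4 : (n : ℤ) ∣ (l : ℤ) - k := by
    have he' : (e : ℤ) ≠ 0 := by exact_mod_cast he
    rw [Nat.cast_mul, mul_comm ((l : ℤ) - k)] at h3
    exact (mul_dvd_mul_iff_left he').1 h3
  have h5 : (l : ℤ) - k = 0 := Int.eq_zero_of_abs_lt_dvd h4 (by rw [abs_lt]; omega)
  rw [h2, h5, zpow_zero]

theorem not_long_of_subset_arc (he : 2 ≤ e) (hn : 0 < n) (hζ : ζ ^ (e * n) = 1)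
    {x : Set (Set ℂ)} (hx : x ∈ NCPee e n)
    (hcov : ∀ b ∈ flatNCP x, ∃ c : ℂ, c ^ e = 1 ∧ dil c b ⊆ arc e n ζ) :
    ¬ IsLong (flatNCP x) := by
  have hN : e * n ≠ 0 := by positivity
  have he0 : e ≠ 0 := by omega
  rintro ⟨b, hb, hb0⟩
  obtain ⟨p, hp, h0⟩ := exists_zero_part hx
  obtain ⟨c, hc, hsub⟩ := hcov b hb
  have hd := zeta_pow_n_pow hN
  have h1 := central_part he0 hx hp h0 hb hb0 (one_pow e)
  have h2 := central_part he0 hx hp h0 hb hb0 hd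
  rw [dil_one] at h1
  rw [← h1] at h2
  obtain ⟨z, hz⟩ := hb.1
  have h3 : zeta (e * n) ^ n * z ∈ b := by
    have := mul_mem_dil (c := zeta (e * n) ^ n) hz
    rwa [← h2] at this
  have h4 := hsub (mul_mem_dil (c := c) h3)
  rw [mul_left_comm] at h4
  exact zeta_pow_n_ne_one he hn
    (eq_one_of_mul_mem_arc hN hζ hd (hsub (mul_mem_dil (c := c) hz)) h4)

/-- Height of a partition below `M_ζ` in terms of its restriction to `a_ζ`. -/
theorem ht_below_Mzeta (he : 2 ≤ e) (hn : 0 < n) (hζ : ζ ^ (e * n) = 1)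
    {x : Set (Set ℂ)} (hx : x ∈ NCPee e n) (hM : Refines x (Mzeta e n ζ)) :
    htEE e n x = n + 1 - (resTo (azeta e n ζ) x).ncard := by
  have hN : e * n ≠ 0 := by positivity
  have he0 : e ≠ 0 := by omega
  have hM' : ∀ a ∈ x, a ⊆ azeta e n ζ ∨
      ∃ c : ℂ, c ^ e = 1 ∧ c ≠ 1 ∧ a ⊆ dil c (arc e n ζ) := by
    intro a ha
    obtain ⟨b, hb, hab⟩ := hM a ha
    rcases hb with rfl | ⟨c, hc, hc1, rfl⟩
    · exact Or.inl hab
    · rw [azeta_diff hN hζ] at hab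
      exact Or.inr ⟨c, hc, hc1, hab⟩
  -- A part meeting `a_ζ` lies in `a_ζ`, because the other blocks of `M_ζ` avoid it.
  have hin : ∀ a ∈ x, (a ∩ azeta e n ζ).Nonempty → a ⊆ azeta e n ζ := by
    rintro a ha ⟨z, hza, hz⟩
    rcases hM' a ha with h | ⟨c, hc, hc1, h⟩
    · exact h
    · obtain ⟨y, hy, hyz⟩ := h hza
      simp only at hyz
      have hy0 : y ≠ 0 := fun h => zero_notMem_arc hN hζ (h ▸ hy)
      rcases hz with rfl | hz
      · exact absurd hyz (mul_ne_zero (ne_zero_of_pow_one he0 hc) hy0)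
      · rw [← hyz] at hz
        exact absurd (eq_one_of_mul_mem_arc hN hζ hc hy hz) hc1
  have hcov : ∀ b ∈ flatNCP x, ∃ c : ℂ, c ^ e = 1 ∧ dil c b ⊆ arc e n ζ := by
    rintro _ ⟨-, a, ha, rfl⟩
    rcases hM' a ha with h | ⟨c, hc, hc1, h⟩
    · refine ⟨1, one_pow e, ?_⟩
      rw [dil_one, ← azeta_diff hN hζ]
      exact sdiff_subset_sdiff_left h
    · refine ⟨c⁻¹, inv_pow_one hc, ?_⟩
      rw [← dil_inv_dil (ne_zero_of_pow_one he0 hc) (arc e n ζ)]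
      exact image_mono (sdiff_subset.trans h)
  have hR := hx.1.resTo (azeta_subset hN hζ)
  have hT : flatNCP (resTo (azeta e n ζ) x) = {b ∈ flatNCP x | b ⊆ arc e n ζ} := by
    ext b
    constructor
    · rintro ⟨hne, _, ⟨hne', a, ha, rfl⟩, rfl⟩
      have h := hin a ha hne'
      rw [inter_eq_left.2 h] at hne ⊢
      refine ⟨⟨hne, a, ha, rfl⟩, ?_⟩
      rw [← azeta_diff hN hζ]
      exact sdiff_subset_sdiff_left h
    · rintro ⟨⟨hne, a, ha, rfl⟩, h⟩
      have hne' : (a ∩ azeta e n ζ).Nonempty := by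
        obtain ⟨z, hz⟩ := hne
        exact ⟨z, hz.1, Or.inr (h hz)⟩
      refine ⟨hne, a ∩ azeta e n ζ, ⟨hne', a, ha, rfl⟩, ?_⟩
      rw [inter_eq_left.2 (hin a ha hne')]
  have hcount : (flatNCP x).ncard = e * (flatNCP (resTo (azeta e n ζ) x)).ncard := by
    rw [hT]
    refine ncard_eq_of_transversal he0 (fun c hc t ht => flat_dil hx hc ht.1) ?_ ?_
    · intro b hb
      obtain ⟨c, hc, h⟩ := hcov b hb
      exact ⟨c, hc, flat_dil hx hc hb, h⟩
    · rintro c hc t ⟨ht, hta⟩ ⟨-, hcta⟩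
      obtain ⟨z, hz⟩ := ht.1
      exact eq_one_of_mul_mem_arc hN hζ hc (hta hz) (hcta (mul_mem_dil hz))
  have hl := not_long_of_subset_arc he hn hζ hx hcov
  have hfin : (azeta e n ζ).Finite := ((mu_finite hN).insert 0).subset (azeta_subset hN hζ)
  by_cases h0 : {0} ∈ x
  · have h0R : {0} ∈ resTo (azeta e n ζ) x :=
      ⟨singleton_nonempty 0, {0}, h0, (inter_eq_left.2 (by simp [azeta])).symm⟩
    rw [ht_short he0 hN hx h0 hcount, ncard_of_zero_mem hfin hR h0R]
    push_cast
    ring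
  · have h0R : {0} ∉ resTo (azeta e n ζ) x := by
      rintro ⟨hne, a, ha, h⟩
      rw [inter_eq_left.2 (hin a ha (h ▸ hne))] at h
      exact h0 (h ▸ ha)
    rw [ht_asym he0 hx h0 hl hcount, ncard_of_zero_notMem hR h0R]

end Arc

/-! ### Partitions above `m_ζ` -/

/-- A chord spanning at most half of the circle meets each ray from the centre that passes
between its endpoints. -/
theorem exists_ray_mem_chord {N a c b : ℕ} (hac : a < c) (hcb : c < b) (hba : 2 * (b - a) ≤ N) :
    ∃ t α β : ℝ, 0 ≤ t ∧ t ≤ 1 ∧ 0 ≤ α ∧ 0 ≤ β ∧ α + β = 1 ∧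
      (α : ℂ) * zeta N ^ a + (β : ℂ) * zeta N ^ b = (t : ℂ) * zeta N ^ c := by
  have hN : (0 : ℝ) < N := by
    have : 0 < N := by omega
    exact_mod_cast this
  have hpi := Real.pi_pos
  have hac' : (a : ℝ) < c := by exact_mod_cast hac
  have hcb' : (c : ℝ) < b := by exact_mod_cast hcb
  have hba' : 2 * ((b : ℝ) - a) ≤ N := by
    rw [← Nat.cast_sub (by omega)]; exact_mod_cast hba
  have hle : ∀ s : ℝ, 2 * s ≤ N → 2 * Real.pi * s / N ≤ Real.pi := by
    intro s hs
    rw [div_le_iff₀ hN]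
    nlinarith
  have hlt : ∀ s : ℝ, 2 * s < N → 2 * Real.pi * s / N < Real.pi := by
    intro s hs
    rw [div_lt_iff₀ hN]
    nlinarith
  have hpos : ∀ s : ℝ, 0 < s → 0 < 2 * Real.pi * s / N := fun s hs => by positivity
  set p := 2 * Real.pi * (c - a : ℝ) / N with hp
  set q := 2 * Real.pi * (b - c : ℝ) / N with hq
  set γ := 2 * Real.pi * c / N with hγ
  have hx : 0 < Real.sin q :=
    Real.sin_pos_of_pos_of_lt_pi (hpos _ (by linarith)) (hlt _ (by linarith))
  have hy : 0 < Real.sin p :=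
    Real.sin_pos_of_pos_of_lt_pi (hpos _ (by linarith)) (hlt _ (by linarith))
  have hpq : p + q = 2 * Real.pi * (b - a : ℝ) / N := by rw [hp, hq]; ring
  have hz : 0 ≤ Real.sin (p + q) := by
    rw [hpq]
    exact Real.sin_nonneg_of_nonneg_of_le_pi (hpos _ (by linarith)).le (hle _ hba')
  have hD : 0 < Real.sin q + Real.sin p := by linarith
  have hzD : Real.sin (p + q) ≤ Real.sin q + Real.sin p := by
    rw [Real.sin_add]
    nlinarith [Real.cos_le_one p, Real.cos_le_one q]
  have ha : 2 * Real.pi * a / N = γ - p := by rw [hp, hγ]; ring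
  have hb : 2 * Real.pi * b / N = γ + q := by rw [hq, hγ]; ring
  refine ⟨Real.sin (p + q) / (Real.sin q + Real.sin p), Real.sin q / (Real.sin q + Real.sin p),
    Real.sin p / (Real.sin q + Real.sin p), by positivity, (div_le_one hD).2 hzD, by positivity,
    by positivity, by rw [← add_div, div_self hD.ne'], ?_⟩
  apply Complex.ext
  · simp only [Complex.add_re, Complex.re_ofReal_mul, zeta_pow_re, ha, hb, ← hγ]
    field_simp
    rw [Real.cos_sub, Real.cos_add, Real.sin_add]
    ring
  · simp only [Complex.add_im, Complex.im_ofReal_mul, zeta_pow_im, ha, hb, ← hγ]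
    field_simp
    rw [Real.sin_sub, Real.sin_add, Real.sin_add]
    ring

section Above

variable {e n : ℕ} {ζ : ℂ} {x : Set (Set ℂ)} {p : Set ℂ}

/-- If `p` is the part of `0` and contains `ζ`, then a part of the flat meeting the open arc
stays in it, unless it is `p \ {0}` or its first rotate: otherwise it would cross the segment
from `0` to `ζ` or to the rotate of `ζ`. -/
theorem subset_openArc (he : 2 ≤ e) (hn : 0 < n) (hζ : ζ ^ (e * n) = 1) (hx : x ∈ NCPee e n)
    (hp : p ∈ x) (h0 : (0 : ℂ) ∈ p) (hζp : ζ ∈ p) {b : Set ℂ} (hb : b ∈ flatNCP x) {y : ℂ}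
    (hyb : y ∈ b) (hy : y ∈ openArc e n ζ) :
    b ⊆ openArc e n ζ ∨ b = p \ {0} ∨ b = dil (zeta (e * n) ^ n) (p \ {0}) := by
  have hN : e * n ≠ 0 := by positivity
  have he0 : e ≠ 0 := by omega
  have hω := zeta_prim hN
  have hr := zeta_pow_n_pow hN
  have hflat := flat_partition hN hx
  have hζ0 := ne_zero_of_pow_one hN hζ
  have hA : p \ {0} ∈ flatNCP x := ⟨⟨ζ, hζp, hζ0⟩, p, hp, rfl⟩
  rw [or_iff_not_imp_left, not_subset]
  rintro ⟨z, hz, hza⟩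
  obtain ⟨k, hk1, hkn, rfl⟩ := hy
  obtain ⟨l, hl1, hlN, rfl⟩ := exists_pow_mul hN hζ ((hflat.1 b hb).2 hz)
  have hln : n ≤ l := by
    by_contra! h
    exact hza ⟨l, hl1, h, rfl⟩
  rcases eq_or_lt_of_le hlN with rfl | hlN
  · left
    rw [hω.pow_eq_one, one_mul] at hz
    exact hflat.eq_of_mem hb hA hz ⟨hζp, hζ0⟩
  rcases eq_or_lt_of_le hln with rfl | hln
  · right
    exact hflat.eq_of_mem hb (flat_dil hx hr hA) hz (mul_mem_dil ⟨hζp, hζ0⟩)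
  have hchord : ∀ a c d : ℕ, a < c → c < d → 2 * (d - a) ≤ e * n →
      zeta (e * n) ^ a * ζ ∈ b → zeta (e * n) ^ d * ζ ∈ b →
      ∃ t : ℝ, 0 ≤ t ∧ t ≤ 1 ∧ (t : ℂ) * (zeta (e * n) ^ c * ζ) ∈ convexHull ℝ b := by
    intro a c d hac hcd hda ha hd
    obtain ⟨t, α, β, ht0, ht1, hα, hβ, hαβ, h⟩ := exists_ray_mem_chord hac hcd hda
    refine ⟨t, ht0, ht1, ?_⟩
    have := convex_convexHull ℝ b (subset_convexHull ℝ b ha) (subset_convexHull ℝ b hd) hα hβ hαβ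
    rwa [Complex.real_smul, Complex.real_smul, ← mul_assoc, ← mul_assoc, ← add_mul, h,
      mul_assoc] at this
  -- The chord from `y` to `z` crosses the ray of index `n` or, the other way round, that of
  -- index `e * n`.
  rcases le_total (2 * (l - k)) (e * n) with h | h
  · right
    obtain ⟨t, ht0, ht1, ht⟩ := hchord k n l hkn hln h hyb hz
    exact eq_dil_of_ray he0 hx hp h0 hζp hr hb ht0 ht1 ht
  · left
    have hyb' : zeta (e * n) ^ (k + e * n) * ζ ∈ b := by
      rwa [pow_add, hω.pow_eq_one, mul_one]
    obtain ⟨t, ht0, ht1, ht⟩ := hchord l (e * n) (k + e * n) hlN (by omega) (by omega) hz hyb'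
    rw [hω.pow_eq_one] at ht
    rw [eq_dil_of_ray he0 hx hp h0 hζp (one_pow e) hb ht0 ht1 ht, dil_one]

theorem openArc_subset_arc : openArc e n ζ ⊆ arc e n ζ := by
  rintro z ⟨k, h1, h2, rfl⟩
  exact ⟨k, h1, h2.le, rfl⟩

theorem mem_arc_cases {z : ℂ} (hz : z ∈ arc e n ζ) :
    z ∈ openArc e n ζ ∨ z = zeta (e * n) ^ n * ζ := by
  obtain ⟨k, h1, h2, rfl⟩ := hz
  rcases eq_or_lt_of_le h2 with rfl | h
  · exact Or.inr rfl
  · exact Or.inl ⟨k, h1, h, rfl⟩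

theorem last_notMem_openArc (hN : e * n ≠ 0) (he : 2 ≤ e) (hζ : ζ ^ (e * n) = 1) :
    zeta (e * n) ^ n * ζ ∉ openArc e n ζ := by
  rintro ⟨k, h1, h2, h⟩
  have hlt : 2 * n ≤ e * n := Nat.mul_le_mul_right n he
  have := (zeta_prim hN).pow_inj (by omega) (by omega)
    (mul_right_cancel₀ (ne_zero_of_pow_one hN hζ) h)
  omega

/-- Up to rotation, the parts of the flat other than the rotates of `p \ {0}` are those inside
the open arc. -/
theorem ncard_flat_diff (he : 2 ≤ e) (hn : 0 < n) (hζ : ζ ^ (e * n) = 1) (hx : x ∈ NCPee e n)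
    (hp : p ∈ x) (h0 : (0 : ℂ) ∈ p) (hζp : ζ ∈ p) :
    (flatNCP x \ (fun c => dil c (p \ {0})) '' mu e).ncard =
      e * {b ∈ flatNCP x | b ⊆ openArc e n ζ}.ncard := by
  have hN : e * n ≠ 0 := by positivity
  have he0 : e ≠ 0 := by omega
  have hr := zeta_pow_n_pow hN
  have hflat := flat_partition hN hx
  have hζ0 := ne_zero_of_pow_one hN hζ
  have hζA : ζ ∈ p \ {0} := ⟨hζp, hζ0⟩
  have hA : p \ {0} ∈ flatNCP x := ⟨⟨ζ, hζA⟩, p, hp, rfl⟩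
  have horb : ∀ b, ∀ c : ℂ, c ^ e = 1 → dil c b ∈ (fun c => dil c (p \ {0})) '' mu e →
      b ∈ (fun c => dil c (p \ {0})) '' mu e := by
    rintro b c hc ⟨d, hd, h⟩
    simp only at h
    refine ⟨c⁻¹ * d, ?_, ?_⟩
    · show (c⁻¹ * d) ^ e = 1
      rw [mul_pow, inv_pow_one hc, one_mul]; exact hd
    · show dil _ _ = _
      rw [← dil_dil, h, dil_inv_dil (ne_zero_of_pow_one he0 hc)]
  refine ncard_eq_of_transversal he0 ?_ ?_ ?_
  · rintro c hc t ⟨ht, hta⟩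
    refine ⟨flat_dil hx hc ht, fun hO => ?_⟩
    obtain ⟨d, hd, rfl⟩ := horb t c hc hO
    -- A rotate of `p \ {0}` contains a rotate of `ζ`, which the open arc avoids.
    have h1 : d * ζ ∈ arc e n ζ := openArc_subset_arc (hta (mul_mem_dil hζA))
    have h2 : (d * (zeta (e * n) ^ n)⁻¹) * (zeta (e * n) ^ n * ζ) ∈ arc e n ζ := by
      have h3 : zeta (e * n) ^ n ≠ 0 := ne_zero_of_pow_one he0 hr
      rwa [mul_assoc, inv_mul_cancel_left₀ h3]
    have h4 := eq_one_of_mul_mem_arc hN hζ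
      (by rw [mul_pow, inv_pow_one hr, mul_one]; exact hd) ⟨n, hn, le_rfl, rfl⟩ h2
    rw [mul_inv_eq_one₀ (ne_zero_of_pow_one he0 hr)] at h4
    exact last_notMem_openArc hN he hζ (h4 ▸ hta (mul_mem_dil hζA))
  · rintro b ⟨hb, hbO⟩
    obtain ⟨z, hz⟩ := hb.1
    obtain ⟨c, hc, hcz⟩ := exists_mul_mem_arc hN hζ ((hflat.1 b hb).2 hz)
    have hcb := flat_dil hx hc hb
    have hcbO : dil c b ∉ (fun c => dil c (p \ {0})) '' mu e := fun h => hbO (horb b c hc h)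
    refine ⟨c, hc, hcb, ?_⟩
    rcases mem_arc_cases hcz with h | h
    · rcases subset_openArc he hn hζ hx hp h0 hζp hcb (mul_mem_dil hz) h with h | h | h
      · exact h
      · exact absurd ⟨1, one_pow e, (dil_one _).trans h.symm⟩ hcbO
      · exact absurd ⟨_, hr, h.symm⟩ hcbO
    · have h1 : c * z ∈ dil c b := mul_mem_dil hz
      rw [h] at h1
      exact absurd ⟨_, hr, hflat.eq_of_mem (flat_dil hx hr hA) hcb (mul_mem_dil hζA) h1⟩ hcbO
  · rintro c hc t ⟨ht, hta⟩ ⟨-, hcta⟩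
    obtain ⟨z, hz⟩ := ht.1
    exact eq_one_of_mul_mem_arc hN hζ hc (openArc_subset_arc (hta hz))
      (openArc_subset_arc (hcta (mul_mem_dil hz)))

/-- The restriction to `a_ζ` consists of the parts inside the open arc and of the traces of the
parts of the two ends `0` and `zeta (e * n) ^ n * ζ`. -/
theorem resTo_eq (he : 2 ≤ e) (hn : 0 < n) (hζ : ζ ^ (e * n) = 1) (hx : x ∈ NCPee e n)
    (hp : p ∈ x) (h0 : (0 : ℂ) ∈ p) (hζp : ζ ∈ p) {p' : Set ℂ} (hp' : p' ∈ x)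
    (hlast : zeta (e * n) ^ n * ζ ∈ p') :
    resTo (azeta e n ζ) x = insert (p ∩ azeta e n ζ) (insert (p' ∩ azeta e n ζ)
      {b ∈ flatNCP x | b ⊆ openArc e n ζ}) := by
  have hN : e * n ≠ 0 := by positivity
  have he0 : e ≠ 0 := by omega
  have hr := zeta_pow_n_pow hN
  have hζ0 := ne_zero_of_pow_one hN hζ
  have hz0 : (0 : ℂ) ∈ azeta e n ζ := Or.inl rfl
  have hzl : zeta (e * n) ^ n * ζ ∈ azeta e n ζ := Or.inr ⟨n, hn, le_rfl, rfl⟩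
  have hoa : openArc e n ζ ⊆ azeta e n ζ := fun z hz => Or.inr (openArc_subset_arc hz)
  have hζA : ζ ∈ p \ {0} := ⟨hζp, hζ0⟩
  have hζarc : ζ ∉ openArc e n ζ := fun h => zeta_pow_n_ne_one he hn
    (eq_one_of_mul_mem_arc hN hζ hr (openArc_subset_arc h) ⟨n, hn, le_rfl, rfl⟩)
  ext s
  constructor
  · rintro ⟨hne, a, ha, rfl⟩
    by_cases hap : a = p
    · exact Or.inl (by rw [hap])
    by_cases hap' : a = p'
    · exact Or.inr (Or.inl (by rw [hap']))
    refine Or.inr (Or.inr ?_)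
    have ha0 : (0 : ℂ) ∉ a := fun h => hap (hx.1.eq_of_mem ha hp h h0)
    have haf : a ∈ flatNCP x := ⟨(hx.1.1 a ha).1, a, ha, (sdiff_singleton_eq_self ha0).symm⟩
    obtain ⟨y, hya, hy⟩ := hne
    have hyo : y ∈ openArc e n ζ := by
      rcases hy with rfl | hy
      · exact absurd hya ha0
      · rcases mem_arc_cases hy with h | h
        · exact h
        · exact absurd (hx.1.eq_of_mem ha hp' (h ▸ hya) hlast) hap'
    rcases subset_openArc he hn hζ hx hp h0 hζp haf hya hyo with h | h | h
    · rw [inter_eq_left.2 (h.trans hoa)]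
      exact ⟨haf, h⟩
    · exact absurd (hx.1.eq_of_mem ha hp (h ▸ hζA) hζp) hap
    · exact absurd (hx.1.eq_of_mem ha hp' (h ▸ mul_mem_dil hζA) hlast) hap'
  · rintro (rfl | rfl | ⟨⟨hne, a, ha, rfl⟩, h⟩)
    · exact ⟨⟨0, h0, hz0⟩, p, hp, rfl⟩
    · exact ⟨⟨_, hlast, hzl⟩, p', hp', rfl⟩
    · have ha0 : (0 : ℂ) ∉ a := by
        intro ha0
        rw [hx.1.eq_of_mem ha hp ha0 h0] at h
        exact hζarc (h hζA)
      rw [sdiff_singleton_eq_self ha0] at hne h ⊢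
      exact ⟨hne, a, ha, (inter_eq_left.2 (h.trans hoa)).symm⟩

/-- Height of a partition above `m_ζ` in terms of its restriction to `a_ζ`. -/
theorem ht_above_mzeta (he : 2 ≤ e) (hn : 0 < n) (hζ : ζ ^ (e * n) = 1) (hx : x ∈ NCPee e n)
    (hp : p ∈ x) (h0 : (0 : ℂ) ∈ p) (hζp : ζ ∈ p) :
    htEE e n x = n + 2 - (resTo (azeta e n ζ) x).ncard := by
  have hN : e * n ≠ 0 := by positivity
  have he0 : e ≠ 0 := by omega
  have hr := zeta_pow_n_pow hN
  have hflat := flat_partition hN hx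
  have hffin := hflat.finite (mu_finite hN)
  have hζ0 := ne_zero_of_pow_one hN hζ
  have hζA : ζ ∈ p \ {0} := ⟨hζp, hζ0⟩
  have hA : p \ {0} ∈ flatNCP x := ⟨⟨ζ, hζA⟩, p, hp, rfl⟩
  have hz0 : (0 : ℂ) ∈ azeta e n ζ := Or.inl rfl
  have hzl : zeta (e * n) ^ n * ζ ∈ azeta e n ζ := Or.inr ⟨n, hn, le_rfl, rfl⟩
  have hrot := flat_dil hx hr hA
  obtain ⟨p', ⟨hp', hlast⟩, -⟩ :=
    hx.1.2 (zeta (e * n) ^ n * ζ) (azeta_subset hN hζ hzl)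
  have hlast0 : zeta (e * n) ^ n * ζ ≠ 0 := mul_ne_zero (ne_zero_of_pow_one he0 hr) hζ0
  have hp'A : p' \ {0} = dil (zeta (e * n) ^ n) (p \ {0}) :=
    hflat.eq_of_mem ⟨⟨_, hlast, hlast0⟩, p', hp', rfl⟩ hrot ⟨hlast, hlast0⟩ (mul_mem_dil hζA)
  have h0x : {0} ∉ x := fun h => by
    rw [hx.1.eq_of_mem hp h h0 rfl] at hζp
    exact hζ0 hζp
  set T := {b ∈ flatNCP x | b ⊆ openArc e n ζ} with hTdef
  have hTfin : T.Finite := hffin.subset fun b hb => hb.1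
  have hp'T : p' ∩ azeta e n ζ ∉ T := fun h =>
    last_notMem_openArc hN he hζ (h.2 ⟨hlast, hzl⟩)
  have hpT : p ∩ azeta e n ζ ∉ T := fun h =>
    zero_notMem_arc hN hζ (openArc_subset_arc (h.2 ⟨h0, hz0⟩))
  have hdiff := ncard_flat_diff he hn hζ hx hp h0 hζp
  have hOsub : (fun c => dil c (p \ {0})) '' mu e ⊆ flatNCP x := by
    rintro _ ⟨c, hc, rfl⟩
    exact flat_dil hx hc hA
  have hsplit := Set.ncard_sdiff_add_ncard_of_subset hOsub hffin
  rw [hdiff] at hsplit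
  rw [resTo_eq he hn hζ hx hp h0 hζp hp' hlast]
  by_cases hl : IsLong (flatNCP x)
  · have hfix : ∀ c : ℂ, c ^ e = 1 → dil c (p \ {0}) = p \ {0} := by
      obtain ⟨b, hb, hb0⟩ := hl
      intro c hc
      rw [← central_part he0 hx hp h0 hb hb0 hc, central_part he0 hx hp h0 hb hb0 (one_pow e),
        dil_one]
    have hO : (fun c => dil c (p \ {0})) '' mu e = {p \ {0}} := by
      ext s
      constructor
      · rintro ⟨c, hc, rfl⟩
        exact hfix c hc
      · rintro rfl
        exact ⟨1, one_pow e, dil_one _⟩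
    rw [hO, Set.ncard_singleton] at hsplit
    have hpp' : p' = p := by
      rw [hfix _ hr] at hp'A
      have : ζ ∈ p' \ {0} := hp'A ▸ hζA
      exact hx.1.eq_of_mem hp' hp this.1 hζp
    rw [hpp', insert_eq_of_mem (mem_insert _ _), Set.ncard_insert_of_notMem hpT hTfin,
      ht_long he0 hx hl hsplit.symm]
    push_cast
    ring
  · have hO : ((fun c => dil c (p \ {0})) '' mu e).ncard = e := by
      rw [ncard_eq_of_transversal (T := {p \ {0}}) he0, Set.ncard_singleton, mul_one]
      · rintro c hc _ rfl
        exact ⟨c, hc, rfl⟩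
      · rintro _ ⟨c, hc, rfl⟩
        exact ⟨c⁻¹, inv_pow_one hc, dil_inv_dil (ne_zero_of_pow_one he0 hc) _⟩
      · rintro c hc _ rfl h
        exact free_of_not_long he0 hl hA hc h
    have hne : p ∩ azeta e n ζ ∉ insert (p' ∩ azeta e n ζ) T := by
      rintro (h | h)
      · have h0' : (0 : ℂ) ∈ p' ∩ azeta e n ζ := h ▸ ⟨h0, hz0⟩
        rw [hx.1.eq_of_mem hp' hp h0'.1 h0] at hp'A
        exact zeta_pow_n_ne_one he hn (free_of_not_long he0 hl hA hr hp'A.symm)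
      · exact hpT h
    have hcount : (flatNCP x).ncard = e * (T.ncard + 1) := by
      rw [← hsplit, hO]; ring
    rw [Set.ncard_insert_of_notMem hne (hTfin.insert _),
      Set.ncard_insert_of_notMem hp'T hTfin, ht_asym he0 hx h0x hl hcount]
    push_cast
    ring

end Above

/-! ### Additivity -/

theorem Refines.trans {u v w : Set (Set ℂ)} (huv : Refines u v) (hvw : Refines v w) :
    Refines u w := fun a ha => by
  obtain ⟨b, hb, hab⟩ := huv a ha
  obtain ⟨c, hc, hbc⟩ := hvw b hb
  exact ⟨c, hc, hab.trans hbc⟩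

/-- Additivity in the three cases of the complement. If `u` lies above `m_ζ`, then so does `v`,
while the complement `w` lies below `M_ζ`; the two height formulas differ by one, which makes up
for the `n + 1` points of `a_ζ`. -/
theorem additive {e n : ℕ} (he : 2 ≤ e) (hn : 0 < n) {u v w : Set (Set ℂ)}
    (hu : u ∈ NCPee e n) (hv : v ∈ NCPee e n) (hw : w ∈ NCPee e n) (h : IsComplEE e n u v w) :
    htEE e n u + htEE e n w = htEE e n v := by
  have hN : e * n ≠ 0 := by positivity
  obtain ⟨huv, ⟨su, sv, k, hk, hwk⟩ | ⟨-, ζ, hζ, hvM, hwM, hk⟩ | ⟨-, ζ, hζ, hmu, hwM, hk⟩⟩ := h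
  · exact additive_symm he hn hu hv hw huv su sv hk hwk
  · have hsub := azeta_subset hN hζ
    have hc := krew_count_azeta he hn hζ (hu.1.resTo hsub) (hv.1.resTo hsub) (hw.1.resTo hsub) hk
    rw [ht_below_Mzeta he hn hζ hu (huv.trans hvM), ht_below_Mzeta he hn hζ hv hvM,
      ht_below_Mzeta he hn hζ hw hwM]
    omega
  · have hsub := azeta_subset hN hζ
    have hc := krew_count_azeta he hn hζ (hu.1.resTo hsub) (hv.1.resTo hsub) (hw.1.resTo hsub) hk
    obtain ⟨p, hp, hpsub⟩ := hmu {0, ζ} (Or.inl rfl)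
    obtain ⟨q, hq, hpq⟩ := huv p hp
    rw [ht_above_mzeta he hn hζ hu hp (hpsub (by simp)) (hpsub (by simp)),
      ht_above_mzeta he hn hζ hv hq (hpq (hpsub (by simp))) (hpq (hpsub (by simp))),
      ht_below_Mzeta he hn hζ hw hwM]
    omega

/-! ### The trivial partition -/

theorem flat_triv {e n : ℕ} (hN : e * n ≠ 0) : flatNCP (trivEE e n) = {mu (e * n)} := by
  have hd : insert 0 (mu (e * n)) \ {0} = mu (e * n) := by
    rw [insert_sdiff_of_mem _ (mem_singleton _), sdiff_singleton_eq_self (zero_notMem_mu hN)]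
  ext s
  constructor
  · rintro ⟨-, _, rfl, rfl⟩
    exact hd
  · rintro rfl
    exact ⟨⟨1, one_pow _⟩, _, rfl, hd.symm⟩

theorem dil_mu {e n : ℕ} (hN : e * n ≠ 0) {c : ℂ} (hc : c ^ e = 1) :
    dil c (mu (e * n)) = mu (e * n) := by
  have hsub : ∀ d : ℂ, d ^ e = 1 → dil d (mu (e * n)) ⊆ mu (e * n) := by
    rintro d hd _ ⟨z, hz, rfl⟩
    show (d * z) ^ (e * n) = 1
    rw [mul_pow, pow_mul, hd, one_pow, one_mul]; exact hz
  have hc0 : c ≠ 0 := ne_zero_of_pow_one (left_ne_zero_of_mul hN) hc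
  refine (hsub c hc).antisymm ?_
  calc mu (e * n) = dil c (dil c⁻¹ (mu (e * n))) := (dil_dil_inv hc0 _).symm
    _ ⊆ dil c (mu (e * n)) := image_mono (hsub _ (inv_pow_one hc))

theorem triv_mem {e n : ℕ} (hN : e * n ≠ 0) : trivEE e n ∈ NCPee e n := by
  refine ⟨⟨?_, ?_⟩, ?_, ?_⟩
  · rintro _ rfl
    exact ⟨⟨0, Or.inl rfl⟩, subset_rfl⟩
  · intro z hz
    exact ⟨_, ⟨rfl, hz⟩, fun _ h => h.1⟩
  · rintro _ rfl _ rfl -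
    rfl
  · intro c hc
    rw [flat_triv hN, rotate, image_singleton]
    exact congrArg _ (dil_mu hN hc)

theorem ht_triv {e n : ℕ} (he : 2 ≤ e) (hn : 0 < n) : htEE e n (trivEE e n) = n + 1 := by
  have hN : e * n ≠ 0 := by positivity
  have he0 : e ≠ 0 := by omega
  have hl : IsLong (flatNCP (trivEE e n)) := by
    rw [flat_triv hN]
    have hr := zeta_pow_n_pow hN
    exact ⟨_, rfl, zero_mem_of_dil_eq he0 hr (zeta_pow_n_ne_one he hn) ⟨1, one_pow _⟩
      (dil_mu hN hr)⟩
  rw [ht_long he0 (triv_mem hN) hl (q := 0) (by rw [flat_triv hN]; simp)]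
  simp

/-- The height on `NCP(e,e,n+1)` (with `m` parts: `n−(m−1)/e` if short
symmetric, `n+1−m/e` if asymmetric, `n+1−(m−1)/e` if long symmetric) is
additive for the complement: for `u ≼ v`, `ht(u) + ht(u\v) = ht(v)`; in
particular `ht(u) + ht(ū) = n+1`. -/
theorem stmt15 (e n : ℕ) (he : 2 ≤ e) (hn : 0 < n) :
    (∀ u v w, u ∈ NCPee e n → v ∈ NCPee e n → w ∈ NCPee e n →
       IsComplEE e n u v w → htEE e n u + htEE e n w = htEE e n v) ∧
    (∀ u w, u ∈ NCPee e n → w ∈ NCPee e n →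
       IsComplEE e n u (trivEE e n) w →
       htEE e n u + htEE e n w = (n : ℤ) + 1) := by
  refine ⟨fun u v w hu hv hw h => additive he hn hu hv hw h, fun u w hu hw h => ?_⟩
  rw [additive he hn hu (triv_mem (by positivity)) hw h, ht_triv he hn]
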